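/- arXiv:1310.4450 — 8 statements merged into one kernel-verified Lean document; each statement's English description precedes it below -/
import Mathlib

section
/- Let K : ℝⁿ × ℝⁿ × ℝⁿ → ℝ be a second-order Finsler–Kawaguchi function that is continuous on ℝⁿ × ℝⁿ × ℝⁿ and C^∞ on the open set where the second slot y ≠ 0. Let t₁ < t₂ and let σ : ℝ → ℝⁿ be C^∞ with σ′(t) ≠ 0 for all t ∈ [t₁, t₂]. Call σ a second-order extremal of the action of K on [t₁, t₂] if for every C^∞ map γ : ℝ × ℝ → ℝⁿ with γ(0, t) = σ(t) for all t ∈ [t₁, t₂] that fixes the lifted endpoints, i.e. γ(s, tᵢ) = σ(tᵢ) and ∂γ/∂t(s, tᵢ) = σ′(tᵢ) for all s ∈ ℝ and i = 1, 2, the function s ↦ ∫_{t₁}^{t₂} K(γ(s, t), ∂γ/∂t(s, t), ∂²γ/∂t²(s, t)) dt has derivative 0 at s = 0. Then σ is a second-order extremal if and only if σ satisfies the second-order Euler–Lagrange equations of K on [t₁, t₂], i.e. E₂(t) = 0 for all t ∈ [t₁, t₂]. -/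
open intervalIntegral

/-- The second-order Euler–Lagrange covector of a second-order Finsler–Kawaguchi function `K`
along a curve `σ`, evaluated at time `t` on the test vector `h`:
`E₂(t)(h) = (D_x(D_yK)(σ²(t))(h))(σ′(t)) + 2·(D_x(D_zK)(σ²(t))(h))(σ″(t))
  − d/dt [D_yK(σ²(t))(h)] + d²/dt² [D_zK(σ²(t))(h)]`,
where `σ²(t) = (σ(t), σ′(t), σ″(t))`. -/
noncomputable def eulerLagrange₂ (n : ℕ)
    (K : EuclideanSpace ℝ (Fin n) × EuclideanSpace ℝ (Fin n) × EuclideanSpace ℝ (Fin n) → ℝ)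
    (σ : ℝ → EuclideanSpace ℝ (Fin n)) (t : ℝ) (h : EuclideanSpace ℝ (Fin n)) : ℝ :=
  (fderiv ℝ (fun x => fderiv ℝ (fun y => K (x, y, deriv (deriv σ) t)) (deriv σ t)) (σ t)) h
      (deriv σ t)
    + 2 * ((fderiv ℝ (fun x => fderiv ℝ (fun z => K (x, deriv σ t, z)) (deriv (deriv σ) t))
        (σ t)) h (deriv (deriv σ) t))
    - deriv (fun s => fderiv ℝ (fun y => K (σ s, y, deriv (deriv σ) s)) (deriv σ s) h) t
    + deriv (deriv (fun s => fderiv ℝ (fun z => K (σ s, deriv σ s, z)) (deriv (deriv σ) s) h)) t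

section FKHelpers

open MeasureTheory Set Filter Topology
open scoped ContDiff

theorem fk_hasDerivAt_integral {F : ℝ × ℝ → ℝ} {O : Set (ℝ × ℝ)} (hO : IsOpen O)
    (hF : ContDiffOn ℝ ∞ F O) {a b : ℝ} (hab : a < b) (hsub : ∀ t ∈ Icc a b, ((0 : ℝ), t) ∈ O) :
    HasDerivAt (fun s => ∫ t in a..b, F (s, t)) (∫ t in a..b, fderiv ℝ F (0, t) (1, 0)) 0 := by
  obtain ⟨V, W, hV, hW, h0V, hIW, hVW⟩ := generalized_tube_lemma
    (isCompact_singleton (x := (0 : ℝ))) (isCompact_Icc (a := a) (b := b)) hO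
    (by rintro ⟨s, t⟩ ⟨hs, ht⟩; obtain rfl : s = 0 := hs; exact hsub t ht)
  obtain ⟨ε, hε, hεV⟩ := Metric.nhds_basis_closedBall.mem_iff.1
    (hV.mem_nhds (h0V (mem_singleton _)))
  have hmem : ∀ s ∈ Metric.closedBall (0 : ℝ) ε, ∀ t ∈ Icc a b, (s, t) ∈ O :=
    fun s hs t ht => hVW ⟨hεV hs, hIW ht⟩
  have hdF : ContinuousOn (fun p => fderiv ℝ F p (1, 0)) O :=
    (hF.continuousOn_fderiv_of_isOpen hO (by simp)).clm_apply continuousOn_const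
  obtain ⟨C, hC⟩ := ((isCompact_closedBall (0 : ℝ) ε).prod
    (isCompact_Icc (a := a) (b := b))).exists_bound_of_continuousOn
    (hdF.mono (fun p hp => hmem p.1 hp.1 p.2 hp.2))
  have hcont : ∀ s ∈ Metric.closedBall (0 : ℝ) ε, ContinuousOn (fun t => F (s, t)) (Icc a b) :=
    fun s hs => hF.continuousOn.comp (by fun_prop) (fun t ht => hmem s hs t ht)
  have h0 : (0 : ℝ) ∈ Metric.closedBall (0 : ℝ) ε := Metric.mem_closedBall_self hε.le
  have hcont' : ContinuousOn (fun t => fderiv ℝ F (0, t) (1, 0)) (Icc a b) :=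
    hdF.comp (f := fun t : ℝ => ((0 : ℝ), t)) (by fun_prop) (fun t ht => hmem 0 h0 t ht)
  have hI : uIoc a b ⊆ Icc a b := by rw [uIoc_of_le hab.le]; exact Ioc_subset_Icc_self
  refine (intervalIntegral.hasDerivAt_integral_of_dominated_loc_of_deriv_le
    (F := fun s t => F (s, t)) (F' := fun s t => fderiv ℝ F (s, t) (1, 0))
    (s := Metric.closedBall (0 : ℝ) ε) (bound := fun _ => C)
    (Metric.closedBall_mem_nhds _ hε) ?_ ?_ ?_ ?_ ?_ ?_).2
  · filter_upwards [Metric.closedBall_mem_nhds (0 : ℝ) hε] with s hs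
    exact ((hcont s hs).mono hI).aestronglyMeasurable measurableSet_uIoc
  · exact (by rw [uIcc_of_le hab.le]; exact hcont 0 h0 : ContinuousOn _ (uIcc a b)).intervalIntegrable
  · exact (hcont'.mono hI).aestronglyMeasurable measurableSet_uIoc
  · exact Eventually.of_forall fun t ht s hs => hC (s, t) ⟨hs, hI ht⟩
  · exact intervalIntegrable_const
  · refine Eventually.of_forall fun t ht s hs => ?_
    have h1 : HasFDerivAt F (fderiv ℝ F (s, t)) (s, t) :=
      ((hF.contDiffAt (hO.mem_nhds (hmem s hs t (hI ht)))).differentiableAt (by simp)).hasFDerivAt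
    exact h1.comp_hasDerivAt s ((hasDerivAt_id s).prodMk (hasDerivAt_const s t))

variable {E : Type*} [NormedAddCommGroup E] [NormedSpace ℝ E]

theorem fk_dir_contDiff {f : ℝ × ℝ → E} (hf : ContDiff ℝ ∞ f) (v : ℝ × ℝ) :
    ContDiff ℝ ∞ (fun p => fderiv ℝ f p v) :=
  (hf.fderiv_right (m := ∞) (by simp)).clm_apply contDiff_const

theorem fk_hasDerivAt_t {f : ℝ × ℝ → E} (hf : ContDiff ℝ ∞ f) (s t : ℝ) :
    HasDerivAt (fun τ => f (s, τ)) (fderiv ℝ f (s, t) (0, 1)) t :=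
  ((hf.differentiable (by simp)) (s, t)).hasFDerivAt.comp_hasDerivAt t
    ((hasDerivAt_const t s).prodMk (hasDerivAt_id t))

theorem fk_hasDerivAt_s {f : ℝ × ℝ → E} (hf : ContDiff ℝ ∞ f) (s t : ℝ) :
    HasDerivAt (fun x => f (x, t)) (fderiv ℝ f (s, t) (1, 0)) s :=
  ((hf.differentiable (by simp)) (s, t)).hasFDerivAt.comp_hasDerivAt s
    ((hasDerivAt_id s).prodMk (hasDerivAt_const s t))

theorem fk_dir_comm {f : ℝ × ℝ → E} (hf : ContDiff ℝ ∞ f) (p v w : ℝ × ℝ) :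
    fderiv ℝ (fun p => fderiv ℝ f p v) p w = fderiv ℝ (fun p => fderiv ℝ f p w) p v := by
  have h2 : DifferentiableAt ℝ (fderiv ℝ f) p :=
    (hf.fderiv_right (m := ∞) (by simp)).differentiable (by simp) p
  have hs : IsSymmSndFDerivAt ℝ f p := hf.contDiffAt.isSymmSndFDerivAt (by
    simp only [minSmoothness_of_isRCLikeNormedField]
    exact WithTop.coe_le_coe.2 (le_top (a := (2 : ℕ∞))))
  rw [fderiv_clm_apply h2 (by fun_prop), fderiv_clm_apply h2 (by fun_prop)]
  simpa using hs w v

/-- Integration by parts. -/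
theorem fk_parts {A B C : ℝ → E →L[ℝ] ℝ} {V : Set ℝ} (hV : IsOpen V)
    (hA : ContDiffOn ℝ ∞ A V) (hB : ContDiffOn ℝ ∞ B V) (hC : ContDiffOn ℝ ∞ C V)
    {a b : ℝ} (hab : a < b) (hI : Icc a b ⊆ V)
    {w w' w'' : ℝ → E} (hw : ∀ t, HasDerivAt w (w' t) t) (hw' : ∀ t, HasDerivAt w' (w'' t) t)
    (hw'' : Continuous w'') (ha : w a = 0) (hb : w b = 0) (ha' : w' a = 0) (hb' : w' b = 0) :
    ∫ t in a..b, (A t (w t) + B t (w' t) + C t (w'' t)) =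
      ∫ t in a..b, (A t - deriv B t + deriv (deriv C) t) (w t) := by
  have hU : uIcc a b ⊆ V := by rwa [uIcc_of_le hab.le]
  have cw : Continuous w := continuous_iff_continuousAt.2 fun t => (hw t).continuousAt
  have cw' : Continuous w' := continuous_iff_continuousAt.2 fun t => (hw' t).continuousAt
  have hdB : ContDiffOn ℝ ∞ (deriv B) V := hB.deriv_of_isOpen hV (by simp)
  have hdC : ContDiffOn ℝ ∞ (deriv C) V := hC.deriv_of_isOpen hV (by simp)
  have hddC : ContDiffOn ℝ ∞ (deriv (deriv C)) V := hdC.deriv_of_isOpen hV (by simp)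
  have cA := hA.continuousOn.mono hU
  have cB := hB.continuousOn.mono hU
  have cC := hC.continuousOn.mono hU
  have cdB := hdB.continuousOn.mono hU
  have cddC := hddC.continuousOn.mono hU
  have i1 : ContinuousOn (fun t => A t (w t) + B t (w' t) + C t (w'' t)) (uIcc a b) :=
    ((cA.clm_apply cw.continuousOn).add (cB.clm_apply cw'.continuousOn)).add
      (cC.clm_apply hw''.continuousOn)
  have i2 : ContinuousOn (fun t => (A t - deriv B t + deriv (deriv C) t) (w t)) (uIcc a b) :=
    ((cA.sub cdB).add cddC).clm_apply cw.continuousOn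
  have key := intervalIntegral.integral_eq_sub_of_hasDerivAt
    (f := fun t => B t (w t) + C t (w' t) - deriv C t (w t))
    (f' := fun t => (A t (w t) + B t (w' t) + C t (w'' t))
      - (A t - deriv B t + deriv (deriv C) t) (w t)) (a := a) (b := b) ?_
      (i1.sub i2).intervalIntegrable
  · rw [intervalIntegral.integral_sub i1.intervalIntegrable i2.intervalIntegrable] at key
    simp only [ha, hb, ha', hb', map_zero] at key
    linarith
  · intro t ht
    have htV := hV.mem_nhds (hU ht)
    have dB := ((hB.contDiffAt htV).differentiableAt (by simp)).hasDerivAt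
    have dC := ((hC.contDiffAt htV).differentiableAt (by simp)).hasDerivAt
    have ddC := ((hdC.contDiffAt htV).differentiableAt (by simp)).hasDerivAt
    refine (((dB.clm_apply (hw t)).add (dC.clm_apply (hw' t))).sub
      (ddC.clm_apply (hw t))).congr_deriv ?_
    simp only [add_apply, sub_apply]
    ring

/-- Fundamental lemma. -/
theorem fk_fundamental {g : ℝ → ℝ} {a b : ℝ} (hab : a < b) (hg : ContinuousOn g (Icc a b))
    (h : ∀ φ : ℝ → ℝ, ContDiff ℝ ∞ φ → tsupport φ ⊆ Ioo a b → ∫ t in a..b, φ t * g t = 0) :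
    ∀ t ∈ Icc a b, g t = 0 := by
  have hae := isOpen_Ioo.ae_eq_zero_of_integral_contDiff_smul_eq_zero (U := Ioo a b) (f := g)
    (μ := volume) ((hg.mono Ioo_subset_Icc_self).locallyIntegrableOn measurableSet_Ioo) (by
      intro φ hφ _ hs
      rw [← h φ hφ hs, intervalIntegral.integral_of_le hab.le, setIntegral_eq_integral_of_forall_compl_eq_zero]
      · simp
      · intro x hx
        have : φ x = 0 := image_eq_zero_of_notMem_tsupport
          (fun hx' => hx (Ioo_subset_Ioc_self (hs hx')))
        simp [this])
  have h2 : g =ᵐ[volume.restrict (Ioo a b)] fun _ => 0 := by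
    rw [EventuallyEq, ae_restrict_iff' measurableSet_Ioo]; exact hae
  rw [Measure.restrict_congr_set Ioo_ae_eq_Icc] at h2
  exact fun t ht => Measure.eqOn_Icc_of_ae_eq volume hab.ne h2 hg continuousOn_const ht

section
variable {K : E × E × E → ℝ}

theorem fk_isOpen : IsOpen {p : E × E × E | p.2.1 ≠ 0} :=
  isOpen_ne_fun (by fun_prop) (by fun_prop)

theorem fk_hasFDerivAt (hK : ContDiffOn ℝ ∞ K {p : E × E × E | p.2.1 ≠ 0}) {x y z : E}
    (hy : y ≠ 0) : HasFDerivAt K (fderiv ℝ K (x, y, z)) (x, y, z) :=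
  ((hK.contDiffAt (fk_isOpen.mem_nhds (by simpa using hy))).differentiableAt
    (by simp)).hasFDerivAt

theorem fk_Dx (hK : ContDiffOn ℝ ∞ K {p : E × E × E | p.2.1 ≠ 0}) {x y z : E} (hy : y ≠ 0) :
    HasFDerivAt (fun x => K (x, y, z))
      ((fderiv ℝ K (x, y, z)).comp (ContinuousLinearMap.inl ℝ E (E × E))) x :=
  (fk_hasFDerivAt hK hy).comp x (hasFDerivAt_prodMk_left x (y, z))

theorem fk_Dy (hK : ContDiffOn ℝ ∞ K {p : E × E × E | p.2.1 ≠ 0}) {x y z : E} (hy : y ≠ 0) :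
    fderiv ℝ (fun y => K (x, y, z)) y = (fderiv ℝ K (x, y, z)).comp
      ((ContinuousLinearMap.inr ℝ E (E × E)).comp (ContinuousLinearMap.inl ℝ E E)) := by
  have h1 : HasFDerivAt (fun y : E => (x, y, z)) ((ContinuousLinearMap.inr ℝ E (E × E)).comp
      (ContinuousLinearMap.inl ℝ E E)) y :=
    (hasFDerivAt_prodMk_right x (y, z)).comp y (hasFDerivAt_prodMk_left y z)
  exact ((fk_hasFDerivAt hK hy).comp y h1).fderiv

theorem fk_Dz (hK : ContDiffOn ℝ ∞ K {p : E × E × E | p.2.1 ≠ 0}) {x y z : E} (hy : y ≠ 0) :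
    fderiv ℝ (fun z => K (x, y, z)) z = (fderiv ℝ K (x, y, z)).comp
      ((ContinuousLinearMap.inr ℝ E (E × E)).comp (ContinuousLinearMap.inr ℝ E E)) := by
  have h1 : HasFDerivAt (fun z : E => (x, y, z)) ((ContinuousLinearMap.inr ℝ E (E × E)).comp
      (ContinuousLinearMap.inr ℝ E E)) z :=
    (hasFDerivAt_prodMk_right x (y, z)).comp z (hasFDerivAt_prodMk_right y z)
  exact ((fk_hasFDerivAt hK hy).comp z h1).fderiv

theorem fk_euler (hK : ContDiffOn ℝ ∞ K {p : E × E × E | p.2.1 ≠ 0})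
    (hhom : ∀ (x y z : E) (l ρ : ℝ), 0 < l →
      K (x, l • y, (l ^ 2) • z + ρ • y) = l * K (x, y, z)) {x y z : E} (hy : y ≠ 0) :
    fderiv ℝ K (x, y, z) (0, y, 0) + 2 * fderiv ℝ K (x, y, z) (0, 0, z) = K (x, y, z) := by
  have hc : HasDerivAt (fun l : ℝ => (x, l • y, (l ^ 2) • z)) ((0 : E), y, (2 : ℝ) • z) 1 := by
    refine (hasDerivAt_const _ _).prodMk (HasDerivAt.prodMk ?_ ?_)
    · simpa using (hasDerivAt_id (1 : ℝ)).smul_const y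
    · simpa using (hasDerivAt_pow 2 (1 : ℝ)).smul_const z
  have h1 : HasDerivAt (fun l : ℝ => K (x, l • y, (l ^ 2) • z))
      (fderiv ℝ K (x, y, z) ((0 : E), y, (2 : ℝ) • z)) 1 := by
    refine HasFDerivAt.comp_hasDerivAt (1 : ℝ) ?_ hc
    simpa using fk_hasFDerivAt hK hy
  have h2 : HasDerivAt (fun l : ℝ => K (x, l • y, (l ^ 2) • z)) (1 * K (x, y, z)) 1 := by
    refine ((hasDerivAt_id (1 : ℝ)).mul_const (K (x, y, z))).congr_of_eventuallyEq ?_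
    filter_upwards [lt_mem_nhds (zero_lt_one (α := ℝ))] with l hl
    simpa using hhom x y z l 0 hl
  have h3 := h1.unique h2
  have : ((0 : E), y, (2 : ℝ) • z) = ((0 : E), y, (0 : E)) + (2 : ℝ) • ((0 : E), (0 : E), z) := by
    simp
  rw [this, map_add, map_smul, one_mul, smul_eq_mul] at h3
  exact h3

theorem fk_euler_x (hK : ContDiffOn ℝ ∞ K {p : E × E × E | p.2.1 ≠ 0})
    (hhom : ∀ (x y z : E) (l ρ : ℝ), 0 < l →
      K (x, l • y, (l ^ 2) • z + ρ • y) = l * K (x, y, z)) {x y z : E} (hy : y ≠ 0) (h : E) :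
    fderiv ℝ (fun x => fderiv ℝ (fun y => K (x, y, z)) y) x h y
      + 2 * fderiv ℝ (fun x => fderiv ℝ (fun z => K (x, y, z)) z) x h z
      = fderiv ℝ K (x, y, z) (h, 0, 0) := by
  have hd : DifferentiableAt ℝ (fun x => fderiv ℝ K (x, y, z)) x := by
    have h1 : DifferentiableAt ℝ (fderiv ℝ K) (x, y, z) :=
      (((hK.fderiv_of_isOpen (m := ∞) fk_isOpen (by simp)).contDiffAt
        (fk_isOpen.mem_nhds (by simpa using hy))).differentiableAt (by simp))
    exact h1.comp x (f := fun x => (x, y, z)) (by fun_prop)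
  simp only [fk_Dy hK hy, fk_Dz hK hy]
  have e1 : (fun x => K (x, y, z)) = fun x => fderiv ℝ K (x, y, z) (0, y, 0)
      + 2 * fderiv ℝ K (x, y, z) (0, 0, z) := by
    ext x; exact (fk_euler hK hhom hy).symm
  have e2 := (fk_Dx hK hy (x := x) (z := z)).fderiv
  rw [e1] at e2
  have e3 := DFunLike.congr_fun e2 h
  have d1 : ∀ v : E × E × E, HasFDerivAt (fun x => fderiv ℝ K (x, y, z) v)
      ((fderiv ℝ (fun x => fderiv ℝ K (x, y, z)) x).flip v) x := fun v => by
    simpa using hd.hasFDerivAt.clm_apply (hasFDerivAt_const v x)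
  have d2 : ∀ L : E →L[ℝ] E × E × E, ∀ v : E,
      fderiv ℝ (fun x => (fderiv ℝ K (x, y, z)).comp L) x h v =
       fderiv ℝ (fun x => fderiv ℝ K (x, y, z)) x h (L v) := fun L v => by
    have := hd.hasFDerivAt.clm_comp (hasFDerivAt_const L x)
    rw [this.fderiv]
    simp
  rw [d2, d2]
  have e4 : HasFDerivAt (fun x => fderiv ℝ K (x, y, z) (0, y, 0)
      + 2 * fderiv ℝ K (x, y, z) (0, 0, z)) _ x :=
    (d1 (0, y, 0)).add ((d1 (0, 0, z)).const_mul 2)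
  rw [e4.fderiv] at e3
  have e5 : ((h, 0, 0) : E × E × E) = (h, 0) := rfl
  rw [e5]
  simpa using e3

end

section
variable {K : E × E × E → ℝ} {σ : ℝ → E}

/-- The derivative of `K` along the lifted curve, precomposed with `L`. -/
noncomputable def fkP (K : E × E × E → ℝ) (σ : ℝ → E) (L : E →L[ℝ] E × E × E) (t : ℝ) :
    E →L[ℝ] ℝ :=
  (fderiv ℝ K (σ t, deriv σ t, deriv (deriv σ) t)).comp L

theorem fk_deriv_contDiff (hσ : ContDiff ℝ ∞ σ) : ContDiff ℝ ∞ (deriv σ) :=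
  (contDiff_infty_iff_deriv.1 hσ).2

theorem fkP_contDiffOn (hK : ContDiffOn ℝ ∞ K {p : E × E × E | p.2.1 ≠ 0})
    (hσ : ContDiff ℝ ∞ σ) (L : E →L[ℝ] E × E × E) :
    ContDiffOn ℝ ∞ (fkP K σ L) {t | deriv σ t ≠ 0} := by
  have h1 := hK.fderiv_of_isOpen (m := ∞) fk_isOpen (by simp)
  have h2 : ContDiff ℝ ∞ (fun t => (σ t, deriv σ t, deriv (deriv σ) t)) :=
    hσ.prodMk ((fk_deriv_contDiff hσ).prodMk (fk_deriv_contDiff (fk_deriv_contDiff hσ)))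
  exact (h1.comp h2.contDiffOn (fun t ht => ht)).clm_comp contDiffOn_const

/-- The Euler-Lagrange covector in standard form. -/
noncomputable def fkEL (K : E × E × E → ℝ) (σ : ℝ → E) (t : ℝ) : E →L[ℝ] ℝ :=
  fkP K σ (ContinuousLinearMap.inl ℝ E (E × E)) t
    - deriv (fkP K σ ((ContinuousLinearMap.inr ℝ E (E × E)).comp
        (ContinuousLinearMap.inl ℝ E E))) t
    + deriv (deriv (fkP K σ ((ContinuousLinearMap.inr ℝ E (E × E)).comp
        (ContinuousLinearMap.inr ℝ E E)))) t

theorem fk_isOpen_V (hσ : ContDiff ℝ ∞ σ) : IsOpen {t | deriv σ t ≠ 0} :=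
  isOpen_ne_fun (fk_deriv_contDiff hσ).continuous continuous_const

theorem fkEL_continuousOn (hK : ContDiffOn ℝ ∞ K {p : E × E × E | p.2.1 ≠ 0})
    (hσ : ContDiff ℝ ∞ σ) : ContinuousOn (fkEL K σ) {t | deriv σ t ≠ 0} := by
  have hV := fk_isOpen_V hσ
  refine ((fkP_contDiffOn hK hσ _).continuousOn.sub
    ((fkP_contDiffOn hK hσ _).deriv_of_isOpen (m := ∞) hV (by simp)).continuousOn).add
    (((fkP_contDiffOn hK hσ _).deriv_of_isOpen (m := ∞) hV (by simp)).deriv_of_isOpen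
      (m := ∞) hV (by simp)).continuousOn

theorem fk_deriv_apply {A : ℝ → E →L[ℝ] ℝ} {V : Set ℝ} (hV : IsOpen V)
    (hA : ContDiffOn ℝ ∞ A V) (h : E) {t : ℝ} (ht : t ∈ V) :
    deriv (fun s => A s h) t = deriv A t h := by
  have dA := ((hA.contDiffAt (hV.mem_nhds ht)).differentiableAt (by simp)).hasDerivAt
  simpa using (dA.clm_apply (hasDerivAt_const t h)).deriv

/-- First variation formula. -/
theorem fk_first_variation (hK : ContDiffOn ℝ ∞ K {p : E × E × E | p.2.1 ≠ 0})
    {t₁ t₂ : ℝ} (ht : t₁ < t₂) (hσ : ContDiff ℝ ∞ σ)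
    (hreg : ∀ t ∈ Icc t₁ t₂, deriv σ t ≠ 0)
    {γ : ℝ × ℝ → E} (hγ : ContDiff ℝ ∞ γ)
    (h0 : ∀ t ∈ Icc t₁ t₂, γ (0, t) = σ t)
    (h1 : ∀ s : ℝ, γ (s, t₁) = σ t₁) (h2 : ∀ s : ℝ, γ (s, t₂) = σ t₂)
    (h1' : ∀ s : ℝ, deriv (fun τ => γ (s, τ)) t₁ = deriv σ t₁)
    (h2' : ∀ s : ℝ, deriv (fun τ => γ (s, τ)) t₂ = deriv σ t₂) :
    HasDerivAt (fun s => ∫ t in t₁..t₂,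
      K (γ (s, t), deriv (fun τ => γ (s, τ)) t, deriv (deriv (fun τ => γ (s, τ))) t))
      (∫ t in t₁..t₂, fkEL K σ t (deriv (fun s => γ (s, t)) 0)) 0 := by
  set G1 : ℝ × ℝ → E := fun p => fderiv ℝ γ p (0, 1) with hG1
  set G2 : ℝ × ℝ → E := fun p => fderiv ℝ G1 p (0, 1) with hG2
  have cG1 : ContDiff ℝ ∞ G1 := fk_dir_contDiff hγ _
  have cG2 : ContDiff ℝ ∞ G2 := fk_dir_contDiff cG1 _
  have e1 : ∀ s, deriv (fun τ => γ (s, τ)) = fun t => G1 (s, t) :=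
    fun s => funext fun t => (fk_hasDerivAt_t hγ s t).deriv
  have e2 : ∀ s, deriv (deriv (fun τ => γ (s, τ))) = fun t => G2 (s, t) := fun s => by
    rw [e1]; exact funext fun t => (fk_hasDerivAt_t cG1 s t).deriv
  set J : ℝ × ℝ → E × E × E := fun p => (γ p, G1 p, G2 p) with hJ
  have cJ : ContDiff ℝ ∞ J := hγ.prodMk (cG1.prodMk cG2)
  -- values along s = 0 in the interior
  have i1 : ∀ t ∈ Ioo t₁ t₂, G1 (0, t) = deriv σ t := by
    intro t htt
    have : (fun τ => γ (0, τ)) =ᶠ[𝓝 t] σ := by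
      filter_upwards [isOpen_Ioo.mem_nhds htt] with τ hτ using h0 τ (Ioo_subset_Icc_self hτ)
    rw [← this.deriv_eq, e1]
  have i2 : ∀ t ∈ Ioo t₁ t₂, G2 (0, t) = deriv (deriv σ) t := by
    intro t htt
    have : (fun τ => G1 (0, τ)) =ᶠ[𝓝 t] deriv σ := by
      filter_upwards [isOpen_Ioo.mem_nhds htt] with τ hτ using i1 τ hτ
    rw [← this.deriv_eq, (fk_hasDerivAt_t cG1 0 t).deriv]
  have i1c : ∀ t ∈ Icc t₁ t₂, G1 (0, t) = deriv σ t := by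
    intro t htt
    rcases eq_or_lt_of_le htt.1 with rfl | hl
    · rw [← h1' 0, e1]
    rcases eq_or_lt_of_le htt.2 with rfl | hr
    · rw [← h2' 0, e1]
    exact i1 t ⟨hl, hr⟩
  have hO : IsOpen (J ⁻¹' {p | p.2.1 ≠ 0}) := fk_isOpen.preimage cJ.continuous
  have hKJ : ContDiffOn ℝ ∞ (K ∘ J) (J ⁻¹' {p | p.2.1 ≠ 0}) :=
    hK.comp cJ.contDiffOn (fun p hp => hp)
  have hsub : ∀ t ∈ Icc t₁ t₂, ((0 : ℝ), t) ∈ J ⁻¹' {p | p.2.1 ≠ 0} := by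
    intro t htt
    change G1 (0, t) ≠ 0
    rw [i1c t htt]; exact hreg t htt
  have main := fk_hasDerivAt_integral hO hKJ ht hsub
  -- variation field
  set W : ℝ × ℝ → E := fun p => fderiv ℝ γ p (1, 0) with hW
  set W1 : ℝ × ℝ → E := fun p => fderiv ℝ W p (0, 1) with hW1
  set W2 : ℝ × ℝ → E := fun p => fderiv ℝ W1 p (0, 1) with hW2
  have cW : ContDiff ℝ ∞ W := fk_dir_contDiff hγ _
  have cW1 : ContDiff ℝ ∞ W1 := fk_dir_contDiff cW _
  have cW2 : ContDiff ℝ ∞ W2 := fk_dir_contDiff cW1 _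
  have s1 : ∀ p, fderiv ℝ G1 p (1, 0) = W1 p := fun p => fk_dir_comm hγ p _ _
  have s2 : ∀ p, fderiv ℝ G2 p (1, 0) = W2 p := fun p => by
    rw [hG2, fk_dir_comm cG1 p, hW2]
    simp only [s1]
  have w0 : ∀ t, deriv (fun s => γ (s, t)) 0 = W (0, t) :=
    fun t => (fk_hasDerivAt_s hγ 0 t).deriv
  have b1 : W (0, t₁) = 0 := by rw [← w0]; simp [h1]
  have b2 : W (0, t₂) = 0 := by rw [← w0]; simp [h2]
  have b1' : W1 (0, t₁) = 0 := by
    rw [← s1, ← (fk_hasDerivAt_s cG1 0 t₁).deriv]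
    have : ∀ s, G1 (s, t₁) = deriv σ t₁ := fun s => by rw [← h1' s, e1]
    simp [this]
  have b2' : W1 (0, t₂) = 0 := by
    rw [← s1, ← (fk_hasDerivAt_s cG1 0 t₂).deriv]
    have : ∀ s, G1 (s, t₂) = deriv σ t₂ := fun s => by rw [← h2' s, e1]
    simp [this]
  have hparts := fk_parts (fk_isOpen_V hσ)
    (fkP_contDiffOn hK hσ (ContinuousLinearMap.inl ℝ E (E × E)))
    (fkP_contDiffOn hK hσ ((ContinuousLinearMap.inr ℝ E (E × E)).comp
        (ContinuousLinearMap.inl ℝ E E)))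
    (fkP_contDiffOn hK hσ ((ContinuousLinearMap.inr ℝ E (E × E)).comp
        (ContinuousLinearMap.inr ℝ E E))) ht hreg
    (w := fun t => W (0, t)) (w' := fun t => W1 (0, t)) (w'' := fun t => W2 (0, t))
    (fun t => fk_hasDerivAt_t cW 0 t) (fun t => fk_hasDerivAt_t cW1 0 t)
    (cW2.continuous.comp (by fun_prop)) b1 b2 b1' b2'
  have hint : (∫ t in t₁..t₂, fderiv ℝ (K ∘ J) (0, t) (1, 0)) =
      ∫ t in t₁..t₂, fkEL K σ t (deriv (fun s => γ (s, t)) 0) := by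
    simp only [w0]
    refine Eq.trans ?_ hparts
    rw [intervalIntegral.integral_of_le ht.le, intervalIntegral.integral_of_le ht.le,
      integral_Ioc_eq_integral_Ioo, integral_Ioc_eq_integral_Ioo]
    refine setIntegral_congr_fun measurableSet_Ioo fun t htt => ?_
    have htI := Ioo_subset_Icc_self htt
    have eJ : J (0, t) = (σ t, deriv σ t, deriv (deriv σ) t) := by
      simp only [hJ, h0 t htI, i1 t htt, i2 t htt]
    have dJ : HasDerivAt (fun s => J (s, t)) (W (0, t), W1 (0, t), W2 (0, t)) 0 := by
      have a1 := fk_hasDerivAt_s hγ 0 t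
      have a2 := fk_hasDerivAt_s cG1 0 t
      have a3 := fk_hasDerivAt_s cG2 0 t
      rw [s1] at a2
      rw [s2] at a3
      exact a1.prodMk (a2.prodMk a3)
    have dK : HasFDerivAt K (fderiv ℝ K (J (0, t))) (J (0, t)) := by
      rw [eJ]; exact fk_hasFDerivAt hK (hreg t htI)
    have d1 : HasDerivAt (fun s => K (J (s, t)))
        (fderiv ℝ K (J (0, t)) (W (0, t), W1 (0, t), W2 (0, t))) 0 :=
      dK.comp_hasDerivAt 0 dJ
    have d2 : HasDerivAt (fun s => K (J (s, t))) (fderiv ℝ (K ∘ J) (0, t) (1, 0)) 0 := by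
      have : DifferentiableAt ℝ (K ∘ J) (0, t) :=
        dK.differentiableAt.comp _ (cJ.differentiable (by simp) _)
      exact this.hasFDerivAt.comp_hasDerivAt (0 : ℝ)
        ((hasDerivAt_id (0 : ℝ)).prodMk (hasDerivAt_const (0 : ℝ) t))
    change fderiv ℝ (K ∘ J) (0, t) (1, 0) = _
    rw [d2.unique d1, eJ]
    simp only [fkP, ContinuousLinearMap.comp_apply, ContinuousLinearMap.inl_apply,
      ContinuousLinearMap.inr_apply]
    rw [← map_add, ← map_add]
    simp
  rw [hint] at main
  simp only [e2]
  simp only [e1]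
  exact main

end

theorem fk_eulerLagrange_eq (n : ℕ)
    {K : EuclideanSpace ℝ (Fin n) × EuclideanSpace ℝ (Fin n) × EuclideanSpace ℝ (Fin n) → ℝ}
    (hhom : ∀ (x y z : EuclideanSpace ℝ (Fin n)) (l ρ : ℝ), 0 < l →
      K (x, l • y, (l ^ 2) • z + ρ • y) = l * K (x, y, z))
    (hK : ContDiffOn ℝ ∞ K {p | p.2.1 ≠ 0})
    {σ : ℝ → EuclideanSpace ℝ (Fin n)} (hσ : ContDiff ℝ ∞ σ) {t : ℝ} (ht : deriv σ t ≠ 0)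
    (h : EuclideanSpace ℝ (Fin n)) : eulerLagrange₂ n K σ t h = fkEL K σ t h := by
  have hV := fk_isOpen_V hσ
  have hN : ∀ t ∈ {t | deriv σ t ≠ 0}, ∀ᶠ s in 𝓝 t, s ∈ {t | deriv σ t ≠ 0} :=
    fun t ht => hV.mem_nhds ht
  unfold eulerLagrange₂ fkEL
  rw [fk_euler_x hK hhom ht]
  set ιy := (ContinuousLinearMap.inr ℝ (EuclideanSpace ℝ (Fin n)) (EuclideanSpace ℝ (Fin n) × EuclideanSpace ℝ (Fin n))).comp
    (ContinuousLinearMap.inl ℝ (EuclideanSpace ℝ (Fin n)) (EuclideanSpace ℝ (Fin n))) with hιy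
  set ιz := (ContinuousLinearMap.inr ℝ (EuclideanSpace ℝ (Fin n)) (EuclideanSpace ℝ (Fin n) × EuclideanSpace ℝ (Fin n))).comp
    (ContinuousLinearMap.inr ℝ (EuclideanSpace ℝ (Fin n)) (EuclideanSpace ℝ (Fin n))) with hιz
  have cy := fkP_contDiffOn hK hσ ιy
  have cz := fkP_contDiffOn hK hσ ιz
  have q1 : deriv (fun s => fderiv ℝ (fun y => K (σ s, y, deriv (deriv σ) s)) (deriv σ s) h) t
      = deriv (fkP K σ ιy) t h := by
    rw [← fk_deriv_apply hV cy h ht]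
    refine EventuallyEq.deriv_eq ?_
    filter_upwards [hN t ht] with s hs
    rw [fk_Dy hK hs]; rfl
  have q2 : ∀ t ∈ {t | deriv σ t ≠ 0},
      deriv (fun s => fderiv ℝ (fun z => K (σ s, deriv σ s, z)) (deriv (deriv σ) s) h) t
      = deriv (fkP K σ ιz) t h := by
    intro t ht
    rw [← fk_deriv_apply hV cz h ht]
    refine EventuallyEq.deriv_eq ?_
    filter_upwards [hN t ht] with s hs
    rw [fk_Dz hK hs]; rfl
  have q3 : deriv (deriv (fun s => fderiv ℝ (fun z => K (σ s, deriv σ s, z))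
      (deriv (deriv σ) s) h)) t = deriv (deriv (fkP K σ ιz)) t h := by
    rw [← fk_deriv_apply hV (cz.deriv_of_isOpen (m := ∞) hV (by simp)) h ht]
    refine EventuallyEq.deriv_eq ?_
    filter_upwards [hN t ht] with s hs using q2 s hs
  rw [q1, q3]
  rfl

end FKHelpers

/-- **Extremals of the second-order Finsler–Kawaguchi action are characterised by the
second-order Euler–Lagrange equations.** -/
theorem finsler_kawaguchi_extremal_iff_eulerLagrange
    (n : ℕ)
    (K : EuclideanSpace ℝ (Fin n) × EuclideanSpace ℝ (Fin n) × EuclideanSpace ℝ (Fin n) → ℝ)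
    (hhom : ∀ (x y z : EuclideanSpace ℝ (Fin n)) (l ρ : ℝ), 0 < l →
      K (x, l • y, (l ^ 2) • z + ρ • y) = l * K (x, y, z))
    (hKcont : Continuous K)
    (hKsmooth : ContDiffOn ℝ (⊤ : ℕ∞) K
      {p : EuclideanSpace ℝ (Fin n) × EuclideanSpace ℝ (Fin n) × EuclideanSpace ℝ (Fin n) |
        p.2.1 ≠ 0})
    (t₁ t₂ : ℝ) (ht : t₁ < t₂)
    (σ : ℝ → EuclideanSpace ℝ (Fin n)) (hσ : ContDiff ℝ (⊤ : ℕ∞) σ)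
    (hreg : ∀ t ∈ Set.Icc t₁ t₂, deriv σ t ≠ 0) :
    (∀ γ : ℝ × ℝ → EuclideanSpace ℝ (Fin n), ContDiff ℝ (⊤ : ℕ∞) γ →
        (∀ t ∈ Set.Icc t₁ t₂, γ (0, t) = σ t) →
        (∀ s : ℝ, γ (s, t₁) = σ t₁) → (∀ s : ℝ, γ (s, t₂) = σ t₂) →
        (∀ s : ℝ, deriv (fun τ => γ (s, τ)) t₁ = deriv σ t₁) →
        (∀ s : ℝ, deriv (fun τ => γ (s, τ)) t₂ = deriv σ t₂) →
        HasDerivAt (fun s => ∫ t in t₁..t₂,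
          K (γ (s, t), deriv (fun τ => γ (s, τ)) t, deriv (deriv (fun τ => γ (s, τ))) t)) 0 0)
      ↔ (∀ t ∈ Set.Icc t₁ t₂, ∀ h : EuclideanSpace ℝ (Fin n), eulerLagrange₂ n K σ t h = 0) := by
  constructor
  · intro hext t htt h
    rw [fk_eulerLagrange_eq n hhom hKsmooth hσ (hreg t htt)]
    have hc : ContinuousOn (fun t => fkEL K σ t h) (Set.Icc t₁ t₂) :=
      ((fkEL_continuousOn hKsmooth hσ).mono hreg).clm_apply continuousOn_const
    refine fk_fundamental ht hc ?_ t htt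
    intro φ hφ hsupp
    have z : ∀ x, x ∉ Set.Ioo t₁ t₂ → φ x = 0 := fun x hx =>
      image_eq_zero_of_notMem_tsupport (fun hx' => hx (hsupp hx'))
    have z' : ∀ x, x ∉ Set.Ioo t₁ t₂ → deriv φ x = 0 := fun x hx =>
      image_eq_zero_of_notMem_tsupport (fun hx' => hx (hsupp (tsupport_deriv_subset hx')))
    have n1 : t₁ ∉ Set.Ioo t₁ t₂ := by simp
    have n2 : t₂ ∉ Set.Ioo t₁ t₂ := by simp
    let γ : ℝ × ℝ → EuclideanSpace ℝ (Fin n) := fun p => σ p.2 + (p.1 * φ p.2) • h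
    have hγ : ContDiff ℝ (⊤ : ℕ∞) γ :=
      (hσ.comp contDiff_snd).add
        ((contDiff_fst.mul (hφ.comp contDiff_snd)).smul contDiff_const)
    have hd : ∀ s t, deriv (fun τ => γ (s, τ)) t = deriv σ t + (s * deriv φ t) • h := fun s t =>
      ((hσ.differentiable (by simp) t).hasDerivAt.add
        (((hφ.differentiable (by simp) t).hasDerivAt.const_mul s).smul_const h)).deriv
    have g0 : ∀ t ∈ Set.Icc t₁ t₂, γ (0, t) = σ t := fun t _ => by simp [γ]
    have g1 : ∀ s : ℝ, γ (s, t₁) = σ t₁ := fun s => by simp [γ, z _ n1]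
    have g2 : ∀ s : ℝ, γ (s, t₂) = σ t₂ := fun s => by simp [γ, z _ n2]
    have g1' : ∀ s : ℝ, deriv (fun τ => γ (s, τ)) t₁ = deriv σ t₁ := fun s => by
      simp [hd, z' _ n1]
    have g2' : ∀ s : ℝ, deriv (fun τ => γ (s, τ)) t₂ = deriv σ t₂ := fun s => by
      simp [hd, z' _ n2]
    have hz := (fk_first_variation hKsmooth ht hσ hreg hγ g0 g1 g2 g1' g2').unique
      (hext γ hγ g0 g1 g2 g1' g2')
    have hw : ∀ t, deriv (fun s => γ (s, t)) 0 = φ t • h := fun t => by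
      have := (((hasDerivAt_id (0 : ℝ)).mul_const (φ t)).smul_const h).const_add (σ t)
      simpa [γ] using this.deriv
    simpa only [hw, map_smul, smul_eq_mul] using hz
  · intro hEL γ hγ g0 g1 g2 g1' g2'
    have hv := fk_first_variation hKsmooth ht hσ hreg hγ g0 g1 g2 g1' g2'
    have hz : (∫ t in t₁..t₂, fkEL K σ t (deriv (fun s => γ (s, t)) 0)) = 0 := by
      refine intervalIntegral.integral_zero_ae (Filter.Eventually.of_forall fun t htt => ?_)
      rw [Set.uIoc_of_le ht.le] at htt
      have htI := Set.Ioc_subset_Icc_self htt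
      rw [← fk_eulerLagrange_eq n hhom hKsmooth hσ (hreg t htI)]
      exact hEL t htI _
    rwa [hz] at hv
end

section
/- (Noether's theorem, first order.) Let F : ℝⁿ × ℝⁿ → ℝ be a Finsler function that is continuous on ℝⁿ × ℝⁿ and C^∞ on ℝⁿ × (ℝⁿ ∖ {0}). Let u : ℝⁿ → ℝⁿ be C¹ and suppose the Lie derivative of the Hilbert form along the tangent lift of u vanishes, i.e. for every (x, v) with v ≠ 0 the covector identity D_x(D_yF)(x, v)(u(x)) + D_y(D_yF)(x, v)(Du(x)(v)) + D_yF(x, v) ∘ Du(x) = 0 holds on ℝⁿ, where Du(x) is the Fréchet derivative of u at x. Then for every C^∞ curve σ with σ′ ≠ 0 on [t₁, t₂] that satisfies the Euler–Lagrange equations of F on [t₁, t₂], the Noether current t ↦ D_yF(σ(t), σ′(t))(u(σ(t))) is constant on [t₁, t₂]. -/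
/-- The Euler–Lagrange covector of a Finsler function `F` along a curve `σ`. -/
noncomputable def eulerLagrange (n : ℕ)
    (F : EuclideanSpace ℝ (Fin n) × EuclideanSpace ℝ (Fin n) → ℝ)
    (σ : ℝ → EuclideanSpace ℝ (Fin n)) (t : ℝ) (h : EuclideanSpace ℝ (Fin n)) : ℝ :=
  (fderiv ℝ (fun x => fderiv ℝ (fun y => F (x, y)) (deriv σ t)) (σ t)) h (deriv σ t)
    - deriv (fun s => fderiv ℝ (fun y => F (σ s, y)) (deriv σ s) h) t

/-- **Noether's theorem (first-order mechanics).**  If the Lie derivative of the Hilbert form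
along the tangent lift of a vector field `u` vanishes, then along every extremal the Noether
current `t ↦ D_yF(σ t, σ′ t)(u (σ t))` is constant. -/
theorem noether_first_order
    (n : ℕ) (F : EuclideanSpace ℝ (Fin n) × EuclideanSpace ℝ (Fin n) → ℝ)
    (hhom : ∀ (x y : EuclideanSpace ℝ (Fin n)) (l : ℝ), 0 < l → F (x, l • y) = l * F (x, y))
    (hFcont : Continuous F)
    (hFsmooth : ContDiffOn ℝ (⊤ : ℕ∞) F
      {p : EuclideanSpace ℝ (Fin n) × EuclideanSpace ℝ (Fin n) | p.2 ≠ 0})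
    (u : EuclideanSpace ℝ (Fin n) → EuclideanSpace ℝ (Fin n)) (hu : ContDiff ℝ 1 u)
    (hinv : ∀ (x v : EuclideanSpace ℝ (Fin n)), v ≠ 0 →
      ∀ h : EuclideanSpace ℝ (Fin n),
        (fderiv ℝ (fun x' => fderiv ℝ (fun y => F (x', y)) v) x) (u x) h
          + (fderiv ℝ (fun v' => fderiv ℝ (fun y => F (x, y)) v') v) (fderiv ℝ u x v) h
          + fderiv ℝ (fun y => F (x, y)) v (fderiv ℝ u x h) = 0)
    (t₁ t₂ : ℝ) (σ : ℝ → EuclideanSpace ℝ (Fin n)) (hσ : ContDiff ℝ (⊤ : ℕ∞) σ)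
    (hreg : ∀ t ∈ Set.Icc t₁ t₂, deriv σ t ≠ 0)
    (hEL : ∀ t ∈ Set.Icc t₁ t₂, ∀ h : EuclideanSpace ℝ (Fin n), eulerLagrange n F σ t h = 0) :
    ∀ t ∈ Set.Icc t₁ t₂, ∀ t' ∈ Set.Icc t₁ t₂,
      fderiv ℝ (fun y => F (σ t, y)) (deriv σ t) (u (σ t)) =
        fderiv ℝ (fun y => F (σ t', y)) (deriv σ t') (u (σ t')) := by
  have hopen : IsOpen {p : EuclideanSpace ℝ (Fin n) × EuclideanSpace ℝ (Fin n) | p.2 ≠ 0} :=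
    isOpen_ne.preimage continuous_snd
  have hFat : ∀ p : EuclideanSpace ℝ (Fin n) × EuclideanSpace ℝ (Fin n), p.2 ≠ 0 →
      ContDiffAt ℝ (⊤ : ℕ∞) F p := fun p hp => hFsmooth.contDiffAt (hopen.mem_nhds hp)
  -- partial derivative as a restriction of the total derivative
  have hP : ∀ p : EuclideanSpace ℝ (Fin n) × EuclideanSpace ℝ (Fin n), p.2 ≠ 0 →
      HasFDerivAt (fun y => F (p.1, y)) ((fderiv ℝ F p).comp
        (ContinuousLinearMap.inr ℝ (EuclideanSpace ℝ (Fin n)) (EuclideanSpace ℝ (Fin n)))) p.2 := by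
    intro p hp
    have h1 : HasFDerivAt F (fderiv ℝ F p) (p.1, p.2) :=
      ((hFat p hp).differentiableAt (by simp)).hasFDerivAt
    exact h1.comp p.2 (hasFDerivAt_prodMk_right p.1 p.2)
  have hPd : ∀ p : EuclideanSpace ℝ (Fin n) × EuclideanSpace ℝ (Fin n), p.2 ≠ 0 →
      DifferentiableAt ℝ (fun q : EuclideanSpace ℝ (Fin n) × EuclideanSpace ℝ (Fin n) =>
        fderiv ℝ (fun y => F (q.1, y)) q.2) p := by
    intro p hp
    have h1 : DifferentiableAt ℝ (fderiv ℝ F) p :=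
      ((hFat p hp).fderiv_right (m := 1) (by
        have h : ((2 : ℕ∞) : WithTop ℕ∞) ≤ ((⊤ : ℕ∞) : WithTop ℕ∞) := WithTop.coe_le_coe.2 le_top
        rw [one_add_one_eq_two]; exact h)).differentiableAt (by simp)
    have h2 : DifferentiableAt ℝ (fun q => (fderiv ℝ F q).comp
        (ContinuousLinearMap.inr ℝ (EuclideanSpace ℝ (Fin n)) (EuclideanSpace ℝ (Fin n)))) p :=
      h1.clm_comp (differentiableAt_const _)
    refine h2.congr_of_eventuallyEq ?_
    filter_upwards [hopen.mem_nhds hp] with q hq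
    exact (hP q hq).fderiv
  -- Euler's identity
  have hEuler : ∀ x v : EuclideanSpace ℝ (Fin n), v ≠ 0 →
      fderiv ℝ (fun y => F (x, y)) v v = F (x, v) := by
    intro x v hv
    have h1 : HasFDerivAt (fun y => F (x, y)) (fderiv ℝ (fun y => F (x, y)) v) ((1 : ℝ) • v) := by
      rw [one_smul]
      exact (hP (x, v) hv).differentiableAt.hasFDerivAt
    have h2 : HasDerivAt (fun l : ℝ => l • v) v 1 := by
      simpa using (hasDerivAt_id (1 : ℝ)).smul_const v
    have h3 := h1.comp_hasDerivAt (1 : ℝ) h2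
    have h4 : HasDerivAt (fun l : ℝ => l * F (x, v)) (F (x, v)) 1 := by
      simpa using (hasDerivAt_id (1 : ℝ)).mul_const (F (x, v))
    refine h3.unique (h4.congr_of_eventuallyEq ?_)
    filter_upwards [lt_mem_nhds (zero_lt_one (α := ℝ))] with l hl
    exact hhom x v l hl
  have hhess : ∀ x v w : EuclideanSpace ℝ (Fin n), v ≠ 0 →
      (fderiv ℝ (fun v' => fderiv ℝ (fun y => F (x, y)) v') v) w v = 0 := by
    intro x v w hv
    have hd : DifferentiableAt ℝ (fun v' => fderiv ℝ (fun y => F (x, y)) v') v :=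
      DifferentiableAt.comp (g := fun q : EuclideanSpace ℝ (Fin n) × EuclideanSpace ℝ (Fin n) =>
        fderiv ℝ (fun y => F (q.1, y)) q.2) (f := fun v' => (x, v')) v (hPd (x, v) hv)
        (hasFDerivAt_prodMk_right x v).differentiableAt
    have h1 := hd.hasFDerivAt.clm_apply (hasFDerivAt_id v)
    have h2 : HasFDerivAt (fun y => F (x, y)) (fderiv ℝ (fun y => F (x, y)) v) v :=
      (hP (x, v) hv).differentiableAt.hasFDerivAt
    have h3 := h1.unique (h2.congr_of_eventuallyEq (by
      filter_upwards [isOpen_ne.mem_nhds hv] with y hy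
      exact hEuler x y hy))
    have h4 := congrArg (fun L => L w) h3
    simpa using h4
  have hder : ∀ t ∈ Set.Icc t₁ t₂,
      HasDerivAt (fun s => fderiv ℝ (fun y => F (σ s, y)) (deriv σ s) (u (σ s))) 0 t := by
    intro t ht
    have hv := hreg t ht
    have hσd : HasDerivAt σ (deriv σ t) t := (hσ.differentiable (by simp) t).hasDerivAt
    have hσ' : DifferentiableAt ℝ (deriv σ) t :=
      (((contDiff_infty_iff_deriv).1 hσ).2.differentiable (by simp)) t
    have hQ : DifferentiableAt ℝ (fun s => fderiv ℝ (fun y => F (σ s, y)) (deriv σ s)) t :=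
      DifferentiableAt.comp (g := fun q : EuclideanSpace ℝ (Fin n) × EuclideanSpace ℝ (Fin n) =>
        fderiv ℝ (fun y => F (q.1, y)) q.2) (f := fun s => (σ s, deriv σ s)) t
        (hPd (σ t, deriv σ t) hv) (hσd.differentiableAt.prodMk hσ')
    have hU : HasDerivAt (fun s => u (σ s)) (fderiv ℝ u (σ t) (deriv σ t)) t :=
      ((hu.differentiable (by simp) (σ t)).hasFDerivAt).comp_hasDerivAt t hσd
    have h1 := hQ.hasDerivAt.clm_apply hU
    have h2 := hQ.hasDerivAt.clm_apply (hasDerivAt_const t (u (σ t)))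
    have h3 := hEL t ht (u (σ t))
    unfold eulerLagrange at h3
    rw [h2.deriv] at h3
    have h4 := hinv (σ t) (deriv σ t) hv (deriv σ t)
    rw [hhess _ _ _ hv] at h4
    simp only [map_zero, add_zero] at h3 h4
    have h5 := h4.symm.trans (congrArg (fun r : ℝ => r + _) (sub_eq_zero.1 h3))
    rw [h5]
    exact h1
  intro t ht t' ht'
  have := (convex_Icc t₁ t₂).norm_image_sub_le_of_norm_hasDerivWithin_le (C := 0)
    (fun s hs => (hder s hs).hasDerivWithinAt) (fun s _ => by simp) ht' ht
  rw [zero_mul] at this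
  exact sub_eq_zero.1 (norm_le_zero_iff.1 this)
end

section
/- (Conservation law for symmetries on the tangent space.) Let F : ℝⁿ × ℝⁿ → ℝ be a Finsler function that is continuous on ℝⁿ × ℝⁿ and C^∞ on ℝⁿ × (ℝⁿ ∖ {0}). Let A, B : ℝⁿ × ℝⁿ → ℝⁿ be C¹ maps (the horizontal and vertical components of a vector field X = Aᵘ ∂/∂xᵘ + Bᵘ ∂/∂yᵘ on the tangent space) and suppose the Lie derivative of the Hilbert form along X vanishes, i.e. for every (x, v) with v ≠ 0: (i) D_x(D_yF)(x, v)(A(x, v)) + D_y(D_yF)(x, v)(B(x, v)) + D_yF(x, v) ∘ ∂_xA(x, v) = 0 as covectors, and (ii) D_yF(x, v) ∘ ∂_yA(x, v) = 0, where ∂_xA(x, v), ∂_yA(x, v) : ℝⁿ → ℝⁿ are the partial Fréchet derivatives of A. Then for every C^∞ curve σ with σ′ ≠ 0 on [t₁, t₂] that satisfies the Euler–Lagrange equations of F on [t₁, t₂], the function t ↦ D_yF(σ(t), σ′(t))(A(σ(t), σ′(t))) is constant on [t₁, t₂]. -/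
/-- **Conservation law for symmetries of the Hilbert form on the tangent space.**
If the Lie derivative of the Hilbert form along a vector field
`X = Aᵘ ∂/∂xᵘ + Bᵘ ∂/∂yᵘ` on the tangent space vanishes, then along every extremal the
function `t ↦ D_yF(σ t, σ′ t)(A(σ t, σ′ t))` is constant. -/
theorem conservation_law_tangent_space_symmetry
    (n : ℕ) (F : EuclideanSpace ℝ (Fin n) × EuclideanSpace ℝ (Fin n) → ℝ)
    (hhom : ∀ (x y : EuclideanSpace ℝ (Fin n)) (l : ℝ), 0 < l → F (x, l • y) = l * F (x, y))
    (hFcont : Continuous F)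
    (hFsmooth : ContDiffOn ℝ (⊤ : ℕ∞) F
      {p : EuclideanSpace ℝ (Fin n) × EuclideanSpace ℝ (Fin n) | p.2 ≠ 0})
    (A B : EuclideanSpace ℝ (Fin n) × EuclideanSpace ℝ (Fin n) → EuclideanSpace ℝ (Fin n))
    (hA : ContDiff ℝ 1 A) (hB : ContDiff ℝ 1 B)
    (hinv₁ : ∀ (x v : EuclideanSpace ℝ (Fin n)), v ≠ 0 →
      ∀ h : EuclideanSpace ℝ (Fin n),
        (fderiv ℝ (fun x' => fderiv ℝ (fun y => F (x', y)) v) x) (A (x, v)) h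
          + (fderiv ℝ (fun v' => fderiv ℝ (fun y => F (x, y)) v') v) (B (x, v)) h
          + fderiv ℝ (fun y => F (x, y)) v (fderiv ℝ (fun x' => A (x', v)) x h) = 0)
    (hinv₂ : ∀ (x v : EuclideanSpace ℝ (Fin n)), v ≠ 0 →
      ∀ h : EuclideanSpace ℝ (Fin n),
        fderiv ℝ (fun y => F (x, y)) v (fderiv ℝ (fun v' => A (x, v')) v h) = 0)
    (t₁ t₂ : ℝ) (σ : ℝ → EuclideanSpace ℝ (Fin n)) (hσ : ContDiff ℝ (⊤ : ℕ∞) σ)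
    (hreg : ∀ t ∈ Set.Icc t₁ t₂, deriv σ t ≠ 0)
    (hEL : ∀ t ∈ Set.Icc t₁ t₂, ∀ h : EuclideanSpace ℝ (Fin n), eulerLagrange n F σ t h = 0) :
    ∀ t ∈ Set.Icc t₁ t₂, ∀ t' ∈ Set.Icc t₁ t₂,
      fderiv ℝ (fun y => F (σ t, y)) (deriv σ t) (A (σ t, deriv σ t)) =
        fderiv ℝ (fun y => F (σ t', y)) (deriv σ t') (A (σ t', deriv σ t')) := by
  have hopen : IsOpen {p : EuclideanSpace ℝ (Fin n) × EuclideanSpace ℝ (Fin n) | p.2 ≠ 0} :=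
    isOpen_ne_fun continuous_snd continuous_const
  have hFat : ∀ x v : EuclideanSpace ℝ (Fin n), v ≠ 0 → ContDiffAt ℝ (⊤ : ℕ∞) F (x, v) :=
    fun x v hv => hFsmooth.contDiffAt (hopen.mem_nhds hv)
  have hFd : ∀ x v : EuclideanSpace ℝ (Fin n), v ≠ 0 → DifferentiableAt ℝ F (x, v) :=
    fun x v hv => (hFat x v hv).differentiableAt (by simp)
  have hFy : ∀ x v : EuclideanSpace ℝ (Fin n), v ≠ 0 →
      DifferentiableAt ℝ (fun y => F (x, y)) v := fun x v hv =>
    DifferentiableAt.comp v (hFd x v hv) (by fun_prop)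
  -- the partial derivative as a map on the total space
  set G : EuclideanSpace ℝ (Fin n) × EuclideanSpace ℝ (Fin n) →
      (EuclideanSpace ℝ (Fin n) →L[ℝ] ℝ) := fun p => fderiv ℝ (fun y => F (p.1, y)) p.2 with hG
  have hGd : ∀ x v : EuclideanSpace ℝ (Fin n), v ≠ 0 → DifferentiableAt ℝ G (x, v) := by
    intro x v hv
    have h1 : DifferentiableAt ℝ (fun p => (fderiv ℝ F p).comp
        (ContinuousLinearMap.inr ℝ (EuclideanSpace ℝ (Fin n)) (EuclideanSpace ℝ (Fin n)))) (x, v) := by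
      have h2 : DifferentiableAt ℝ (fderiv ℝ F) (x, v) :=
        ((hFat x v hv).fderiv_right (m := 1) (by norm_cast)).differentiableAt (by simp)
      exact h2.clm_comp (differentiableAt_const _)
    refine h1.congr_of_eventuallyEq ?_
    filter_upwards [hopen.mem_nhds (show (x, v) ∈ _ from hv)] with p hp
    have h3 := (hFd p.1 p.2 hp).hasFDerivAt.comp p.2 (hasFDerivAt_prodMk_right (𝕜 := ℝ) p.1 p.2)
    exact h3.fderiv
  -- Euler's identity
  have hEuler : ∀ x v : EuclideanSpace ℝ (Fin n), v ≠ 0 →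
      fderiv ℝ (fun y => F (x, y)) v v = F (x, v) := by
    intro x v hv
    have hl : HasDerivAt (fun l : ℝ => l • v) v 1 := by
      simpa using (hasDerivAt_id (1 : ℝ)).smul_const v
    have h1 : HasDerivAt (fun l : ℝ => F (x, l • v)) (fderiv ℝ (fun y => F (x, y)) v v) 1 := by
      have h0 : HasFDerivAt (fun y => F (x, y)) (fderiv ℝ (fun y => F (x, y)) v) ((1 : ℝ) • v) := by
        rw [one_smul]; exact (hFy x v hv).hasFDerivAt
      exact h0.comp_hasDerivAt (1 : ℝ) hl
    have h2 : HasDerivAt (fun l : ℝ => F (x, l • v)) (F (x, v)) 1 := by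
      have h3 : HasDerivAt (fun l : ℝ => l * F (x, v)) (F (x, v)) 1 := by
        simpa using (hasDerivAt_id (1 : ℝ)).mul_const (F (x, v))
      refine h3.congr_of_eventuallyEq ?_
      filter_upwards [lt_mem_nhds (zero_lt_one (α := ℝ))] with l hl
      exact hhom x v l hl
    exact h1.unique h2
  have hGy : ∀ x v : EuclideanSpace ℝ (Fin n), v ≠ 0 →
      DifferentiableAt ℝ (fun v' => fderiv ℝ (fun y => F (x, y)) v') v := fun x v hv =>
    DifferentiableAt.comp (g := G) v (hGd x v hv)
      (by fun_prop : DifferentiableAt ℝ (fun v' => (x, v')) v)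
  have hHess : ∀ x v b : EuclideanSpace ℝ (Fin n), v ≠ 0 →
      (fderiv ℝ (fun v' => fderiv ℝ (fun y => F (x, y)) v') v) b v = 0 := by
    intro x v b hv
    have h1 := (hGy x v hv).hasFDerivAt.clm_apply (hasFDerivAt_id v)
    have h2 : HasFDerivAt (fun v' => fderiv ℝ (fun y => F (x, y)) v' (id v'))
        (fderiv ℝ (fun y => F (x, y)) v) v := by
      refine (hFy x v hv).hasFDerivAt.congr_of_eventuallyEq ?_
      filter_upwards [isOpen_ne.mem_nhds hv] with w hw
      exact hEuler x w hw
    have h3 := DFunLike.congr_fun (h1.unique h2) b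
    simpa using h3
  -- the derivative along the extremal
  have key : ∀ t ∈ Set.Icc t₁ t₂,
      HasDerivAt (fun s => G (σ s, deriv σ s) (A (σ s, deriv σ s))) 0 t := by
    intro t ht
    have hv := hreg t ht
    have hs1 : HasDerivAt σ (deriv σ t) t :=
      (hσ.differentiable (by simp) t).hasDerivAt
    have hs2 : HasDerivAt (deriv σ) (deriv (deriv σ) t) t := by
      have : ContDiff ℝ 1 (deriv σ) :=
        ((contDiff_succ_iff_deriv (n := 1)).1 (hσ.of_le (by norm_cast))).2.2
      exact (this.differentiable (by simp) t).hasDerivAt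
    have hc := hs1.prodMk hs2
    have hp := (hGd (σ t) (deriv σ t) hv).hasFDerivAt.comp_hasDerivAt t hc
    have hAd : DifferentiableAt ℝ A (σ t, deriv σ t) := hA.differentiable (by simp) _
    have ha := hAd.hasFDerivAt.comp_hasDerivAt t hc
    have hfin := hp.clm_apply ha
    refine hfin.congr_deriv ?_
    set a := A (σ t, deriv σ t) with ha'
    have hE := hEL t ht a
    have hph : deriv (fun s => fderiv ℝ (fun y => F (σ s, y)) (deriv σ s) a) t
        = (fderiv ℝ G (σ t, deriv σ t)) (deriv σ t, deriv (deriv σ) t) a := by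
      have := (hp.clm_apply (hasDerivAt_const t a)).deriv
      simpa using this
    have hAx := (hAd.hasFDerivAt.comp (σ t)
      (hasFDerivAt_prodMk_left (𝕜 := ℝ) (σ t) (deriv σ t))).fderiv
    have hAy := (hAd.hasFDerivAt.comp (deriv σ t)
      (hasFDerivAt_prodMk_right (𝕜 := ℝ) (σ t) (deriv σ t))).fderiv
    have i1 := hinv₁ (σ t) (deriv σ t) hv (deriv σ t)
    have i2 := hinv₂ (σ t) (deriv σ t) hv (deriv (deriv σ) t)
    rw [hHess _ _ _ hv] at i1
    have hsplit : (fderiv ℝ A (σ t, deriv σ t)) (deriv σ t, deriv (deriv σ) t)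
        = fderiv ℝ (fun x' => A (x', deriv σ t)) (σ t) (deriv σ t)
          + fderiv ℝ (fun v' => A (σ t, v')) (deriv σ t) (deriv (deriv σ) t) := by
      have e1 := DFunLike.congr_fun hAx (deriv σ t)
      have e2 := DFunLike.congr_fun hAy (deriv (deriv σ) t)
      simp only [Function.comp_def] at e1 e2
      rw [e1, e2]
      simp [← map_add]
    unfold eulerLagrange at hE
    rw [hph] at hE
    simp only [Function.comp_def]
    rw [hsplit, map_add]
    simp only [hG] at *
    linarith
  have hconst := constant_of_has_deriv_right_zero
    (fun t ht => (key t ht).continuousAt.continuousWithinAt)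
    (fun t ht => (key t (Set.Ico_subset_Icc_self ht)).hasDerivWithinAt)
  intro t ht t' ht'
  exact (hconst t ht).trans (hconst t' ht').symm
end

section
/- (Reparameterisation invariance of the second-order Finsler–Kawaguchi length.) Let K : ℝⁿ × ℝⁿ × ℝⁿ → ℝ be a continuous second-order Finsler–Kawaguchi function. Let σ : ℝ → ℝⁿ be C², let s₁ < s₂, and let φ : ℝ → ℝ be C² with φ′(s) > 0 for all s ∈ [s₁, s₂], φ(s₁) = t₁ and φ(s₂) = t₂. Then ∫_{s₁}^{s₂} K((σ ∘ φ)(s), (σ ∘ φ)′(s), (σ ∘ φ)″(s)) ds = ∫_{t₁}^{t₂} K(σ(t), σ′(t), σ″(t)) dt; that is, the second-order Finsler–Kawaguchi length of an arc segment does not change under an orientation-preserving reparameterisation. -/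
open intervalIntegral

/-- **Reparameterisation invariance of the second-order Finsler–Kawaguchi length.** -/
theorem finsler_kawaguchi_length_reparam_invariant
    (n : ℕ)
    (K : EuclideanSpace ℝ (Fin n) × EuclideanSpace ℝ (Fin n) × EuclideanSpace ℝ (Fin n) → ℝ)
    (hhom : ∀ (x y z : EuclideanSpace ℝ (Fin n)) (l ρ : ℝ), 0 < l →
      K (x, l • y, (l ^ 2) • z + ρ • y) = l * K (x, y, z))
    (hK : Continuous K)
    (σ : ℝ → EuclideanSpace ℝ (Fin n)) (hσ : ContDiff ℝ 2 σ)
    (s₁ s₂ t₁ t₂ : ℝ) (hs : s₁ < s₂)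
    (φ : ℝ → ℝ) (hφ : ContDiff ℝ 2 φ)
    (hφ' : ∀ s ∈ Set.Icc s₁ s₂, 0 < deriv φ s)
    (h₁ : φ s₁ = t₁) (h₂ : φ s₂ = t₂) :
    (∫ s in s₁..s₂, K ((σ ∘ φ) s, deriv (σ ∘ φ) s, deriv (deriv (σ ∘ φ)) s)) =
      ∫ t in t₁..t₂, K (σ t, deriv σ t, deriv (deriv σ) t) := by
  have hφ1 : ContDiff ℝ 1 (deriv φ) := by
    have h : ContDiff ℝ (1 + 1) φ := by simpa [one_add_one_eq_two] using hφ
    exact (contDiff_succ_iff_deriv.1 h).2.2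
  have hσ1 : ContDiff ℝ 1 (deriv σ) := by
    have h : ContDiff ℝ (1 + 1) σ := by simpa [one_add_one_eq_two] using hσ
    exact (contDiff_succ_iff_deriv.1 h).2.2
  have hσ2 : Continuous (deriv (deriv σ)) := hσ1.continuous_deriv le_rfl
  have dφ : ∀ s, HasDerivAt φ (deriv φ s) s := fun s =>
    (hφ.differentiable (by norm_num) s).hasDerivAt
  have dσ : ∀ t, HasDerivAt σ (deriv σ t) t := fun t =>
    (hσ.differentiable (by norm_num) t).hasDerivAt
  have dφ1 : ∀ s, HasDerivAt (deriv φ) (deriv (deriv φ) s) s := fun s =>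
    (hφ1.differentiable (by norm_num) s).hasDerivAt
  have dσ1 : ∀ t, HasDerivAt (deriv σ) (deriv (deriv σ) t) t := fun t =>
    (hσ1.differentiable (by norm_num) t).hasDerivAt
  have e1 : deriv (σ ∘ φ) = fun s => deriv φ s • deriv σ (φ s) := by
    funext s
    exact ((dσ (φ s)).scomp s (dφ s)).deriv
  have e2 : ∀ s, deriv (deriv (σ ∘ φ)) s =
      (deriv φ s ^ 2) • deriv (deriv σ) (φ s) + deriv (deriv φ) s • deriv σ (φ s) := by
    intro s
    rw [e1]
    have h := (dφ1 s).smul ((dσ1 (φ s)).scomp s (dφ s))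
    rw [pow_two, mul_smul]
    exact h.deriv
  have hg : Continuous (fun t => K (σ t, deriv σ t, deriv (deriv σ) t)) :=
    hK.comp (hσ.continuous.prodMk (hσ1.continuous.prodMk hσ2))
  have key := integral_deriv_smul_comp (a := s₁) (b := s₂) (fun x _ => dφ x)
    hφ1.continuous.continuousOn hg
  rw [← h₁, ← h₂, ← key]
  refine integral_congr fun s hsm => ?_
  rw [Set.uIcc_of_le hs.le] at hsm
  simp only [e2, Function.comp_apply, smul_eq_mul]
  rw [e1]
  exact hhom _ _ _ _ _ (hφ' s hsm)
end

section
/- (The Finsler–Kawaguchi form reproduces the second-order length.) Let K : ℝⁿ × ℝⁿ × ℝⁿ → ℝ be a second-order Finsler–Kawaguchi function whose partial Fréchet derivatives D_yK(x, y, z), D_zK(x, y, z) ∈ (ℝⁿ)* exist for y ≠ 0 and depend continuously on (x, y, z) there. Let σ : ℝ → ℝⁿ be C² with σ′(t) ≠ 0 for all t ∈ [t₁, t₂]. Then ∫_{t₁}^{t₂} [ D_yK(σ(t), σ′(t), σ″(t))(σ′(t)) + 2·D_zK(σ(t), σ′(t), σ″(t))(σ″(t)) ] dt = ∫_{t₁}^{t₂}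 K(σ(t), σ′(t), σ″(t)) dt; i.e. the integral of the second-order Finsler–Kawaguchi form 𝓚 = (∂K/∂yᵘ) dxᵘ + 2(∂K/∂zᵘ) dyᵘ over the second-order lift of the arc segment equals its Finsler–Kawaguchi length. -/
open intervalIntegral

/-- **The Finsler–Kawaguchi form reproduces the second-order length.**  The integral of the
pullback of the second-order Finsler–Kawaguchi form `𝓚 = (∂K/∂yᵘ) dxᵘ + 2(∂K/∂zᵘ) dyᵘ`
along the second-order lift of an arc segment equals its Finsler–Kawaguchi length. -/
theorem finsler_kawaguchi_form_integral_eq_length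
    (n : ℕ)
    (K : EuclideanSpace ℝ (Fin n) × EuclideanSpace ℝ (Fin n) × EuclideanSpace ℝ (Fin n) → ℝ)
    (hhom : ∀ (x y z : EuclideanSpace ℝ (Fin n)) (l ρ : ℝ), 0 < l →
      K (x, l • y, (l ^ 2) • z + ρ • y) = l * K (x, y, z))
    (hdiffy : ∀ (x y z : EuclideanSpace ℝ (Fin n)), y ≠ 0 →
      DifferentiableAt ℝ (fun y' => K (x, y', z)) y)
    (hdiffz : ∀ (x y z : EuclideanSpace ℝ (Fin n)), y ≠ 0 →
      DifferentiableAt ℝ (fun z' => K (x, y, z')) z)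
    (hconty : ContinuousOn
      (fun p : EuclideanSpace ℝ (Fin n) × EuclideanSpace ℝ (Fin n) × EuclideanSpace ℝ (Fin n) =>
        fderiv ℝ (fun y => K (p.1, y, p.2.2)) p.2.1)
      {p : EuclideanSpace ℝ (Fin n) × EuclideanSpace ℝ (Fin n) × EuclideanSpace ℝ (Fin n) |
        p.2.1 ≠ 0})
    (hcontz : ContinuousOn
      (fun p : EuclideanSpace ℝ (Fin n) × EuclideanSpace ℝ (Fin n) × EuclideanSpace ℝ (Fin n) =>
        fderiv ℝ (fun z => K (p.1, p.2.1, z)) p.2.2)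
      {p : EuclideanSpace ℝ (Fin n) × EuclideanSpace ℝ (Fin n) × EuclideanSpace ℝ (Fin n) |
        p.2.1 ≠ 0})
    (t₁ t₂ : ℝ) (ht : t₁ ≤ t₂)
    (σ : ℝ → EuclideanSpace ℝ (Fin n)) (hσ : ContDiff ℝ 2 σ)
    (hreg : ∀ t ∈ Set.Icc t₁ t₂, deriv σ t ≠ 0) :
    (∫ t in t₁..t₂,
        (fderiv ℝ (fun y => K (σ t, y, deriv (deriv σ) t)) (deriv σ t) (deriv σ t)
          + 2 * fderiv ℝ (fun z => K (σ t, deriv σ t, z)) (deriv (deriv σ) t)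
              (deriv (deriv σ) t))) =
      ∫ t in t₁..t₂, K (σ t, deriv σ t, deriv (deriv σ) t) := by
  apply intervalIntegral.integral_congr
  intro t htt
  rw [Set.uIcc_of_le ht] at htt
  have hy := hreg t htt
  dsimp only
  generalize deriv (deriv σ) t = z
  generalize deriv σ t = y at hy
  generalize σ t = x
  have hopen : IsOpen {p : EuclideanSpace ℝ (Fin n) × EuclideanSpace ℝ (Fin n) ×
      EuclideanSpace ℝ (Fin n) | p.2.1 ≠ 0} :=
    isOpen_ne_fun (by fun_prop) (by fun_prop)
  have hnear : ∀ᶠ v : EuclideanSpace ℝ (Fin n) × EuclideanSpace ℝ (Fin n) in nhds (y, z),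
      v.1 ≠ 0 := (continuous_fst.continuousAt (x := (y, z))).eventually_ne hy
  have hemb : ContinuousAt (fun v : EuclideanSpace ℝ (Fin n) × EuclideanSpace ℝ (Fin n) =>
      (x, v)) (y, z) := by fun_prop
  have c1 := ContinuousAt.comp (x := (y, z)) (hconty.continuousAt
    (hopen.mem_nhds (show ((x, y, z) : _ × _ × _).2.1 ≠ 0 from hy))) hemb
  have c2 := ContinuousAt.comp (x := (y, z)) (hcontz.continuousAt
    (hopen.mem_nhds (show ((x, y, z) : _ × _ × _).2.1 ≠ 0 from hy))) hemb
  have key := (hasStrictFDerivAt_uncurry_coprod (𝕜 := ℝ) (u := (y, z))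
    (f := fun a b => K (x, a, b))
    (f₁ := fun a b => fderiv ℝ (fun a' => K (x, a', b)) a)
    (f₂ := fun a b => fderiv ℝ (fun b' => K (x, a, b')) b)
    (hnear.mono fun v hv => (hdiffy x v.1 v.2 hv).hasFDerivAt)
    (hnear.mono fun v hv => (hdiffz x v.1 v.2 hv).hasFDerivAt) c1 c2).hasFDerivAt
  have hc : HasDerivAt (fun l : ℝ => (l • y, l ^ 2 • z)) (y, (2 : ℝ) • z) 1 := by
    have h1 := (hasDerivAt_id (1 : ℝ)).smul_const y
    have h2 := (hasDerivAt_pow 2 (1 : ℝ)).smul_const z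
    simpa using h1.prodMk h2
  have hcomp := HasFDerivAt.comp_hasDerivAt_of_eq (1 : ℝ) key hc (by simp)
  have hlin : HasDerivAt (fun l : ℝ => l * K (x, y, z)) (K (x, y, z)) 1 := by
    simpa using (hasDerivAt_id (1 : ℝ)).mul_const (K (x, y, z))
  have hlin' := hlin.congr_of_eventuallyEq (f₁ := fun l : ℝ => K (x, l • y, l ^ 2 • z)) (by
    filter_upwards [lt_mem_nhds (zero_lt_one : (0 : ℝ) < 1)] with l hl
    simpa using hhom x y z l 0 hl)
  have := HasDerivAt.unique hcomp hlin'
  rw [← this]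
  simp [Function.HasUncurry.uncurry]
end

section
/- (Integral first variation formula, first-order mechanics.) Let F : ℝⁿ × ℝⁿ → ℝ be a Finsler function that is continuous on ℝⁿ × ℝⁿ and C^∞ on ℝⁿ × (ℝⁿ ∖ {0}). Let t₁ < t₂ and σ : ℝ → ℝⁿ be C^∞ with σ′(t) ≠ 0 for all t ∈ [t₁, t₂]. Let γ : ℝ × ℝ → ℝⁿ be C^∞ with γ(0, t) = σ(t) for all t ∈ [t₁, t₂], and set δ(t) := ∂γ/∂s(0, t). Then the function A(s) := ∫_{t₁}^{t₂} F(γ(s, t), ∂γ/∂t(s, t)) dt is differentiable at s = 0 and A′(0) = ∫_{t₁}^{t₂} E(t)(δ(t)) dt + D_yF(σ(t₂), σ′(t₂))(δ(t₂)) − D_yF(σ(t₁), σ′(t₁))(δ(t₁)), where E(t) is the Euler–Lagrange covector of F along σ. -/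
open intervalIntegral

theorem aux_param (G : ℝ × ℝ → ℝ) (hG : Continuous G) (U : Set (ℝ × ℝ)) (hU : IsOpen U)
    (hGU : ContDiffOn ℝ 1 G U) (a b : ℝ) (hab : a < b)
    (hsub : ∀ t ∈ Set.Icc a b, ((0:ℝ), t) ∈ U) :
    IntervalIntegrable (fun t => fderiv ℝ G (0, t) (1, 0)) MeasureTheory.volume a b ∧
    HasDerivAt (fun s => ∫ t in a..b, G (s, t)) (∫ t in a..b, fderiv ℝ G (0, t) (1, 0)) 0 := by
  have hc : ContinuousOn (fun q => fderiv ℝ G q (1, 0)) U :=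
    (hGU.continuousOn_fderiv_of_isOpen hU le_rfl).clm_apply continuousOn_const
  obtain ⟨V, W, hV, hW, h0, hI, hVW⟩ := generalized_tube_lemma (isCompact_singleton (x := (0:ℝ)))
    (isCompact_Icc (a := a) (b := b)) hU (by
      rintro ⟨s, t⟩ ⟨hs, ht⟩
      simp only [Set.mem_singleton_iff] at hs
      subst hs
      exact hsub t ht)
  obtain ⟨ε, hε, hεV⟩ := Metric.nhds_basis_closedBall.mem_iff.1 (hV.mem_nhds (h0 rfl))
  have hK : Metric.closedBall (0:ℝ) ε ×ˢ Set.Icc a b ⊆ U :=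
    (Set.prod_mono hεV hI).trans hVW
  obtain ⟨C, hC⟩ := ((isCompact_closedBall (0:ℝ) ε).prod
    (isCompact_Icc (a := a) (b := b))).exists_bound_of_continuousOn (hc.mono hK)
  have hu : Set.uIoc a b ⊆ Set.Icc a b := by
    rw [Set.uIoc_of_le hab.le]; exact Set.Ioc_subset_Icc_self
  refine (intervalIntegral.hasDerivAt_integral_of_dominated_loc_of_deriv_le (μ := MeasureTheory.volume)
    (F := fun s t => G (s, t)) (F' := fun s t => fderiv ℝ G (s, t) (1, 0)) (x₀ := (0:ℝ))
    (s := Metric.closedBall 0 ε) (bound := fun _ => C)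
    (Metric.closedBall_mem_nhds _ hε) ?_ ?_ ?_ ?_ ?_ ?_)
  · exact Filter.Eventually.of_forall fun s =>
      (hG.comp (by fun_prop : Continuous fun t : ℝ => (s, t))).aestronglyMeasurable
  · exact (hG.comp (by fun_prop : Continuous fun t : ℝ => ((0:ℝ), t))).intervalIntegrable _ _
  · refine ContinuousOn.aestronglyMeasurable ?_ measurableSet_uIoc
    exact hc.comp (by fun_prop : Continuous fun t : ℝ => ((0:ℝ), t)).continuousOn
      (fun t ht => hsub t (hu ht))
  · exact Filter.Eventually.of_forall fun t ht s hs => hC (s, t) ⟨hs, hu ht⟩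
  · exact intervalIntegrable_const
  · refine Filter.Eventually.of_forall fun t ht s hs => ?_
    have hq : (s, t) ∈ U := hK ⟨hs, hu ht⟩
    have h1 : HasFDerivAt G (fderiv ℝ G (s, t)) (s, t) :=
      ((hGU.contDiffAt (hU.mem_nhds hq)).differentiableAt one_ne_zero).hasFDerivAt
    exact h1.comp_hasDerivAt s ((hasDerivAt_id s).prodMk (hasDerivAt_const s t))

section
variable {E : Type*} [NormedAddCommGroup E] [NormedSpace ℝ E]

theorem aux_partial_y (F : E × E → ℝ) (x y : E) (h : DifferentiableAt ℝ F (x, y)) :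
    fderiv ℝ (fun y => F (x, y)) y = (fderiv ℝ F (x, y)).comp (ContinuousLinearMap.inr ℝ E E) :=
  (h.hasFDerivAt.comp y (hasFDerivAt_prodMk_right x y)).fderiv

theorem aux_euler (F : E × E → ℝ)
    (hhom : ∀ (x y : E) (l : ℝ), 0 < l → F (x, l • y) = l * F (x, y))
    (x y : E) (h : DifferentiableAt ℝ F (x, y)) :
    fderiv ℝ F (x, y) (0, y) = F (x, y) := by
  have h' : HasFDerivAt F (fderiv ℝ F (x, y)) (x, (1:ℝ) • y) := by
    rw [one_smul]; exact h.hasFDerivAt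
  have h1 : HasDerivAt (fun l : ℝ => F (x, l • y)) (fderiv ℝ F (x, y) (0, (1:ℝ) • y)) 1 :=
    h'.comp_hasDerivAt (1:ℝ)
      ((hasDerivAt_const (1:ℝ) x).prodMk ((hasDerivAt_id (1:ℝ)).smul_const y))
  have h2 : HasDerivAt (fun l : ℝ => l * F (x, y)) (1 * F (x, y)) 1 :=
    (hasDerivAt_id (1:ℝ)).mul_const _
  have h3 : (fun l : ℝ => F (x, l • y)) =ᶠ[nhds 1] (fun l : ℝ => l * F (x, y)) := by
    filter_upwards [lt_mem_nhds (zero_lt_one (α := ℝ))] with l hl using hhom x y l hl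
  have := h1.unique (h2.congr_of_eventuallyEq h3)
  simpa using this

/-- D_x F (h) = D_x (D_y F) (h) (y) -/
theorem aux_euler_x (F : E × E → ℝ)
    (hhom : ∀ (x y : E) (l : ℝ), 0 < l → F (x, l • y) = l * F (x, y))
    (hF : ContDiffOn ℝ 2 F {p : E × E | p.2 ≠ 0}) (x y : E) (hy : y ≠ 0) (h : E) :
    (fderiv ℝ (fun x => fderiv ℝ (fun y => F (x, y)) y) x) h y = fderiv ℝ F (x, y) (h, 0) := by
  have hO : IsOpen {p : E × E | p.2 ≠ 0} := isOpen_ne.preimage continuous_snd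
  have hd : ∀ x, ContDiffAt ℝ 2 F (x, y) := fun x => hF.contDiffAt (hO.mem_nhds hy)
  have hd1 : ∀ x, DifferentiableAt ℝ F (x, y) := fun x => (hd x).differentiableAt two_ne_zero
  have e1 : (fun x => fderiv ℝ (fun y => F (x, y)) y) =
      fun x => (fderiv ℝ F (x, y)).comp (ContinuousLinearMap.inr ℝ E E) := by
    funext x; exact aux_partial_y F x y (hd1 x)
  have hdd : DifferentiableAt ℝ (fun x => (fderiv ℝ F (x, y)).comp
      (ContinuousLinearMap.inr ℝ E E)) x := by
    have : DifferentiableAt ℝ (fderiv ℝ F) (x, y) :=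
      ((hd x).fderiv_right (m := 1) (by norm_num)).differentiableAt one_ne_zero
    have h2 : DifferentiableAt ℝ (fun x => fderiv ℝ F (x, y)) x :=
      this.comp x (hasFDerivAt_prodMk_left x y).differentiableAt
    exact h2.clm_comp (differentiableAt_const _)
  rw [e1]
  have h3 := hdd.hasFDerivAt.clm_apply (hasFDerivAt_const y x)
  have h4 : (fun x => ((fderiv ℝ F (x, y)).comp (ContinuousLinearMap.inr ℝ E E)) y)
      = fun x => F (x, y) := by
    funext x; simpa using aux_euler F hhom x y (hd1 x)
  rw [h4] at h3
  have h5 : HasFDerivAt (fun x => F (x, y))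
      ((fderiv ℝ F (x, y)).comp (ContinuousLinearMap.inl ℝ E E)) x :=
    HasFDerivAt.comp x (f := fun x => (x, y)) (hd1 x).hasFDerivAt (hasFDerivAt_prodMk_left x y)
  have := congrArg (fun L => L h) (h3.unique h5)
  simpa using this
end

/-- **Integral first variation formula for first-order mechanics.**
For a smooth variation `γ` of a regular curve `σ` with variation vector field
`δ(t) = ∂γ/∂s(0, t)`, the action `A(s) = ∫_{t₁}^{t₂} F(γ(s,t), ∂γ/∂t(s,t)) dt` is
differentiable at `s = 0` with
`A′(0) = ∫_{t₁}^{t₂} E(t)(δ t) dt + D_yF(σ t₂, σ′ t₂)(δ t₂) − D_yF(σ t₁, σ′ t₁)(δ t₁)`. -/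
theorem first_variation_formula
    (n : ℕ) (F : EuclideanSpace ℝ (Fin n) × EuclideanSpace ℝ (Fin n) → ℝ)
    (hhom : ∀ (x y : EuclideanSpace ℝ (Fin n)) (l : ℝ), 0 < l → F (x, l • y) = l * F (x, y))
    (hFcont : Continuous F)
    (hFsmooth : ContDiffOn ℝ (⊤ : ℕ∞) F
      {p : EuclideanSpace ℝ (Fin n) × EuclideanSpace ℝ (Fin n) | p.2 ≠ 0})
    (t₁ t₂ : ℝ) (ht : t₁ < t₂)
    (σ : ℝ → EuclideanSpace ℝ (Fin n)) (hσ : ContDiff ℝ (⊤ : ℕ∞) σ)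
    (hreg : ∀ t ∈ Set.Icc t₁ t₂, deriv σ t ≠ 0)
    (γ : ℝ × ℝ → EuclideanSpace ℝ (Fin n)) (hγ : ContDiff ℝ (⊤ : ℕ∞) γ)
    (hγ0 : ∀ t ∈ Set.Icc t₁ t₂, γ (0, t) = σ t) :
    HasDerivAt (fun s => ∫ t in t₁..t₂, F (γ (s, t), deriv (fun τ => γ (s, τ)) t))
      ((∫ t in t₁..t₂, eulerLagrange n F σ t (deriv (fun s => γ (s, t)) 0))
        + fderiv ℝ (fun y => F (σ t₂, y)) (deriv σ t₂) (deriv (fun s => γ (s, t₂)) 0)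
        - fderiv ℝ (fun y => F (σ t₁, y)) (deriv σ t₁) (deriv (fun s => γ (s, t₁)) 0))
      0 := by
  have hO : IsOpen {p : EuclideanSpace ℝ (Fin n) × EuclideanSpace ℝ (Fin n) | p.2 ≠ 0} :=
    isOpen_ne.preimage continuous_snd
  have hF2 : ContDiffOn ℝ 2 F
      {p : EuclideanSpace ℝ (Fin n) × EuclideanSpace ℝ (Fin n) | p.2 ≠ 0} :=
    hFsmooth.of_le (by norm_cast)
  have hFd : ∀ x y, y ≠ 0 → DifferentiableAt ℝ F (x, y) := fun x y hy =>
    (hF2.contDiffAt (hO.mem_nhds hy)).differentiableAt two_ne_zero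
  have hγ3 : ContDiff ℝ 3 γ := hγ.of_le (by norm_cast)
  have hσ3 : ContDiff ℝ 3 σ := hσ.of_le (by norm_cast)
  have hγd : Differentiable ℝ γ := hγ3.differentiable (by norm_num)
  have hγ' : ContDiff ℝ 2 (fderiv ℝ γ) := hγ3.fderiv_right (by norm_num)
  have hγ'd : Differentiable ℝ (fderiv ℝ γ) := hγ'.differentiable two_ne_zero
  have hσ' : ContDiff ℝ 2 (deriv σ) := by
    have : ContDiff ℝ (2 + 1) σ := hσ3.of_le (by norm_num)
    exact (contDiff_succ_iff_deriv.1 this).2.2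
  have hdt : ∀ s t, HasDerivAt (fun τ => γ (s, τ)) (fderiv ℝ γ (s, t) (0, 1)) t := fun s t =>
    (hγd (s, t)).hasFDerivAt.comp_hasDerivAt t ((hasDerivAt_const t s).prodMk (hasDerivAt_id t))
  have hds : ∀ s t, HasDerivAt (fun s => γ (s, t)) (fderiv ℝ γ (s, t) (1, 0)) s := fun s t =>
    (hγd (s, t)).hasFDerivAt.comp_hasDerivAt s ((hasDerivAt_id s).prodMk (hasDerivAt_const s t))
  have hσγ : ∀ t ∈ Set.Icc t₁ t₂, fderiv ℝ γ (0, t) (0, 1) = deriv σ t := by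
    intro t hti
    have h1 : HasDerivWithinAt σ (fderiv ℝ γ (0, t) (0, 1)) (Set.Icc t₁ t₂) t :=
      (hdt 0 t).hasDerivWithinAt.congr (fun x hx => (hγ0 x hx).symm) (hγ0 t hti).symm
    have h2 : HasDerivWithinAt σ (deriv σ t) (Set.Icc t₁ t₂) t :=
      ((hσ3.differentiable (by norm_num)) t).hasDerivAt.hasDerivWithinAt
    exact (uniqueDiffOn_Icc ht t hti).eq_deriv _ h1 h2
  let u : ℝ × ℝ → EuclideanSpace ℝ (Fin n) × EuclideanSpace ℝ (Fin n) :=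
    fun q => (γ q, fderiv ℝ γ q (0, 1))
  have hu : ContDiff ℝ 2 u :=
    (hγ3.of_le (by norm_num)).prodMk (hγ'.clm_apply contDiff_const)
  have hu0 : ∀ t ∈ Set.Icc t₁ t₂, u (0, t) = (σ t, deriv σ t) := fun t hti =>
    Prod.ext (hγ0 t hti) (hσγ t hti)
  obtain ⟨hAint, hA⟩ := aux_param (fun q => F (u q)) (hFcont.comp hu.continuous)
    (u ⁻¹' {p | p.2 ≠ 0}) (hO.preimage hu.continuous)
    ((hF2.comp hu.contDiffOn (fun _ h => h)).of_le (by norm_num)) t₁ t₂ ht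
    (fun t hti => by
      show (u (0, t)).2 ≠ 0
      rw [hu0 t hti]; exact hreg t hti)
  have hδ : ∀ t, deriv (fun s => γ (s, t)) 0 = fderiv ℝ γ (0, t) (1, 0) := fun t => (hds 0 t).deriv
  simp only [hδ]
  have hfun : (fun s => ∫ t in t₁..t₂, F (γ (s, t), deriv (fun τ => γ (s, τ)) t)) =
      fun s => ∫ t in t₁..t₂, F (u (s, t)) := by
    simp only [(hdt _ _).deriv, u]
  rw [hfun]
  -- derivative of the integrand
  have hAval : ∀ t ∈ Set.Icc t₁ t₂, fderiv ℝ (fun q => F (u q)) (0, t) (1, 0) =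
      fderiv ℝ F (σ t, deriv σ t)
        (fderiv ℝ γ (0, t) (1, 0), fderiv ℝ (fderiv ℝ γ) (0, t) (0, 1) (1, 0)) := by
    intro t hti
    have h1 : HasFDerivAt F (fderiv ℝ F (σ t, deriv σ t)) (u (0, t)) := by
      rw [hu0 t hti]; exact (hFd _ _ (hreg t hti)).hasFDerivAt
    have h2 : HasFDerivAt u _ (0, t) := (hγd (0, t)).hasFDerivAt.prodMk
      ((hγ'd (0, t)).hasFDerivAt.clm_apply (hasFDerivAt_const ((0:ℝ), (1:ℝ)) ((0:ℝ), t)))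
    have h3 := (HasFDerivAt.comp (0, t) h1 h2).fderiv
    have h4 : IsSymmSndFDerivAt ℝ γ (0, t) :=
      hγ3.contDiffAt.isSymmSndFDerivAt (by simp; norm_num)
    have h5 := congrArg (fun L => L ((1:ℝ), (0:ℝ))) h3
    rw [h4 (0, 1) (1, 0)]
    simpa [Function.comp_def] using h5
  let p : ℝ → (EuclideanSpace ℝ (Fin n) →L[ℝ] ℝ) := fun t =>
    (fderiv ℝ F (σ t, deriv σ t)).comp (ContinuousLinearMap.inr ℝ _ _)
  let T : Set ℝ := {t | deriv σ t ≠ 0}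
  have hT : IsOpen T := isOpen_ne.preimage hσ'.continuous
  have hTI : Set.Icc t₁ t₂ ⊆ T := fun t hti => hreg t hti
  have hp : ContDiffOn ℝ 1 p T := by
    have h1 : ContDiffOn ℝ 1 (fderiv ℝ F)
        {p : EuclideanSpace ℝ (Fin n) × EuclideanSpace ℝ (Fin n) | p.2 ≠ 0} :=
      hF2.fderiv_of_isOpen hO (by norm_num)
    have h2 : ContDiffOn ℝ 1 (fun t => fderiv ℝ F (σ t, deriv σ t)) T :=
      h1.comp (g := fderiv ℝ F) (f := fun t => (σ t, deriv σ t))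
        (((hσ3.of_le (by norm_num)).prodMk (hσ'.of_le (by norm_num))).contDiffOn)
        (fun _ h => h)
    exact h2.clm_comp contDiffOn_const
  have hpd : ∀ t ∈ T, HasDerivAt p (deriv p t) t := fun t htT =>
    ((hp.contDiffAt (hT.mem_nhds htT)).differentiableAt one_ne_zero).hasDerivAt
  have hpc : ContinuousOn (deriv p) T := hp.continuousOn_deriv_of_isOpen hT le_rfl
  have hpy : ∀ t ∈ T, fderiv ℝ (fun y => F (σ t, y)) (deriv σ t) = p t := fun t htT =>
    aux_partial_y F _ _ (hFd _ _ htT)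
  have hEL : ∀ t ∈ T, ∀ h, eulerLagrange n F σ t h =
      fderiv ℝ F (σ t, deriv σ t) (h, 0) - deriv p t h := by
    intro t htT h
    unfold eulerLagrange
    rw [aux_euler_x F hhom hF2 _ _ htT]
    congr 1
    have h1 : HasDerivAt (fun s => p s h) (deriv p t h) t := by
      simpa using (hpd t htT).clm_apply (hasDerivAt_const t h)
    refine (h1.congr_of_eventuallyEq ?_).deriv
    filter_upwards [hT.mem_nhds htT] with s hs
    rw [hpy s hs]
  have hδd : ∀ t, HasDerivAt (fun t => fderiv ℝ γ (0, t) (1, 0))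
      (fderiv ℝ (fderiv ℝ γ) (0, t) (0, 1) (1, 0)) t := by
    intro t
    have h1 : HasDerivAt (fun t => fderiv ℝ γ (0, t)) (fderiv ℝ (fderiv ℝ γ) (0, t) (0, 1)) t :=
      (hγ'd (0, t)).hasFDerivAt.comp_hasDerivAt t
        ((hasDerivAt_const t (0:ℝ)).prodMk (hasDerivAt_id t))
    simpa using h1.clm_apply (hasDerivAt_const t ((1:ℝ), (0:ℝ)))
  have hQ : ∀ t ∈ T, HasDerivAt (fun t => p t (fderiv ℝ γ (0, t) (1, 0)))
      (deriv p t (fderiv ℝ γ (0, t) (1, 0)) +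
        p t (fderiv ℝ (fderiv ℝ γ) (0, t) (0, 1) (1, 0))) t := fun t htT =>
    (hpd t htT).clm_apply (hδd t)
  have hδ'c : Continuous fun t : ℝ => fderiv ℝ (fderiv ℝ γ) (0, t) (0, 1) (1, 0) := by
    have h1 : Continuous (fderiv ℝ (fderiv ℝ γ)) := hγ'.continuous_fderiv two_ne_zero
    have h2 : Continuous fun t : ℝ => fderiv ℝ (fderiv ℝ γ) (0, t) :=
      h1.comp (by fun_prop)
    exact (h2.clm_apply continuous_const).clm_apply continuous_const
  have hδc : Continuous fun t : ℝ => fderiv ℝ γ (0, t) (1, 0) :=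
    continuous_iff_continuousAt.2 fun t => (hδd t).continuousAt
  have hQint : IntervalIntegrable (fun t => deriv p t (fderiv ℝ γ (0, t) (1, 0)) +
      p t (fderiv ℝ (fderiv ℝ γ) (0, t) (0, 1) (1, 0))) MeasureTheory.volume t₁ t₂ := by
    refine ContinuousOn.intervalIntegrable ?_
    rw [Set.uIcc_of_le ht.le]
    exact ((hpc.clm_apply hδc.continuousOn).add
      (hp.continuousOn.clm_apply hδ'c.continuousOn)).mono hTI
  have hFTC := intervalIntegral.integral_eq_sub_of_hasDerivAt
    (fun t hti => hQ t (hTI (by rwa [Set.uIcc_of_le ht.le] at hti))) hQint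
  have hELint : (∫ t in t₁..t₂, eulerLagrange n F σ t (fderiv ℝ γ (0, t) (1, 0))) =
      (∫ t in t₁..t₂, fderiv ℝ (fun q => F (u q)) (0, t) (1, 0)) -
      ∫ t in t₁..t₂, (deriv p t (fderiv ℝ γ (0, t) (1, 0)) +
        p t (fderiv ℝ (fderiv ℝ γ) (0, t) (0, 1) (1, 0))) := by
    rw [← integral_sub hAint hQint]
    refine integral_congr fun t hti => ?_
    rw [Set.uIcc_of_le ht.le] at hti
    show eulerLagrange n F σ t (fderiv ℝ γ (0, t) (1, 0)) = _ - _
    rw [hEL t (hTI hti), hAval t hti]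
    have hsplit : ∀ a b : EuclideanSpace ℝ (Fin n), fderiv ℝ F (σ t, deriv σ t) (a, b) =
        fderiv ℝ F (σ t, deriv σ t) (a, 0) + p t b := by
      intro a b
      have : (a, b) = (a, 0) + ((0 : EuclideanSpace ℝ (Fin n)), b) := by simp
      rw [this, map_add]; rfl
    rw [hsplit _ (fderiv ℝ (fderiv ℝ γ) (0, t) (0, 1) (1, 0))]; ring
  rw [hELint, hFTC, hpy t₁ (hTI ⟨le_rfl, ht.le⟩), hpy t₂ (hTI ⟨ht.le, le_rfl⟩)]
  convert hA using 1
  ring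
end

section
/- (Zermelo's conditions.) Let n ≥ 1 and let K : ℝⁿ × ℝⁿ × ℝⁿ → ℝ satisfy the second-order homogeneity condition K(x, λ • y, λ² • z + ρ • y) = λ * K(x, y, z) for all λ > 0, ρ ∈ ℝ and all x, y, z. If K is Fréchet differentiable at a point (x, y, z), then Zermelo's conditions hold there: D_yK(x, y, z)(y) + 2·D_zK(x, y, z)(z) = K(x, y, z) and D_zK(x, y, z)(y) = 0, where D_yK(x, y, z), D_zK(x, y, z) ∈ (ℝⁿ)* are the partial Fréchet derivatives of K in its second and third slots. -/
/-- **Zermelo's conditions.**  A function `K(x, y, z)` satisfying the second-order homogeneity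
condition `K(x, λ•y, λ²•z + ρ•y) = λ·K(x, y, z)` satisfies, at every point of Fréchet
differentiability, `D_yK(x,y,z)(y) + 2·D_zK(x,y,z)(z) = K(x,y,z)` and `D_zK(x,y,z)(y) = 0`. -/
theorem zermelo_conditions
    (n : ℕ) (hn : 1 ≤ n)
    (K : EuclideanSpace ℝ (Fin n) × EuclideanSpace ℝ (Fin n) × EuclideanSpace ℝ (Fin n) → ℝ)
    (hhom : ∀ (x y z : EuclideanSpace ℝ (Fin n)) (l ρ : ℝ), 0 < l →
      K (x, l • y, (l ^ 2) • z + ρ • y) = l * K (x, y, z))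
    (x y z : EuclideanSpace ℝ (Fin n))
    (hdiff : DifferentiableAt ℝ K (x, y, z)) :
    fderiv ℝ (fun y' => K (x, y', z)) y y + 2 * fderiv ℝ (fun z' => K (x, y, z')) z z
        = K (x, y, z)
      ∧ fderiv ℝ (fun z' => K (x, y, z')) z y = 0 := by
  obtain ⟨L, hL⟩ := hdiff
  have hy : HasFDerivAt (fun y' => K (x, y', z))
      (L.comp ((0 : EuclideanSpace ℝ (Fin n) →L[ℝ] EuclideanSpace ℝ (Fin n)).prod
        ((ContinuousLinearMap.id ℝ _).prod 0))) y :=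
    HasFDerivAt.comp (g := K) y hL
      ((hasFDerivAt_const x y).prodMk ((hasFDerivAt_id y).prodMk (hasFDerivAt_const z y)))
  have hz : HasFDerivAt (fun z' => K (x, y, z'))
      (L.comp ((0 : EuclideanSpace ℝ (Fin n) →L[ℝ] EuclideanSpace ℝ (Fin n)).prod
        ((0 : EuclideanSpace ℝ (Fin n) →L[ℝ] EuclideanSpace ℝ (Fin n)).prod
          (ContinuousLinearMap.id ℝ _)))) z :=
    HasFDerivAt.comp (g := K) z hL
      ((hasFDerivAt_const x z).prodMk ((hasFDerivAt_const y z).prodMk (hasFDerivAt_id z)))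
  rw [hy.fderiv, hz.fderiv]
  have c1 : HasDerivAt (fun t : ℝ => (x, t • y, (t ^ 2) • z)) (0, y, (2 : ℝ) • z) 1 := by
    refine (hasDerivAt_const _ x).prodMk (HasDerivAt.prodMk ?_ ?_)
    · simpa using (hasDerivAt_id (1 : ℝ)).smul_const y
    · simpa using (hasDerivAt_pow 2 (1 : ℝ)).smul_const z
  have c2 : HasDerivAt (fun t : ℝ => (x, y, z + t • y)) (0, 0, y) 0 := by
    refine (hasDerivAt_const _ x).prodMk ((hasDerivAt_const _ y).prodMk ?_)
    simpa using ((hasDerivAt_id (0 : ℝ)).smul_const y).const_add z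
  have d1 : HasDerivAt (fun t : ℝ => K (x, t • y, (t ^ 2) • z)) (L (0, y, (2 : ℝ) • z)) 1 :=
    HasFDerivAt.comp_hasDerivAt (l := K) 1 (by simpa using hL) c1
  have d2 : HasDerivAt (fun t : ℝ => K (x, y, z + t • y)) (L (0, 0, y)) 0 :=
    HasFDerivAt.comp_hasDerivAt (l := K) 0 (by simpa using hL) c2
  have e1 : HasDerivAt (fun t : ℝ => K (x, t • y, (t ^ 2) • z)) (K (x, y, z)) 1 := by
    have h : HasDerivAt (fun t : ℝ => t * K (x, y, z)) (K (x, y, z)) 1 := by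
      simpa using (hasDerivAt_id (1 : ℝ)).mul_const (K (x, y, z))
    refine h.congr_of_eventuallyEq ?_
    filter_upwards [lt_mem_nhds (zero_lt_one (α := ℝ))] with t ht
    simpa using hhom x y z t 0 ht
  have e2 : HasDerivAt (fun t : ℝ => K (x, y, z + t • y)) 0 0 := by
    have h : (fun t : ℝ => K (x, y, z + t • y)) = fun _ => K (x, y, z) := by
      funext t
      simpa using hhom x y z 1 t one_pos
    rw [h]
    exact hasDerivAt_const _ _
  have f1 := d1.unique e1
  have f2 := d2.unique e2
  constructor
  · have h : ((0, y, (2 : ℝ) • z) : EuclideanSpace ℝ (Fin n) × EuclideanSpace ℝ (Fin n) ×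
        EuclideanSpace ℝ (Fin n)) = (0, y, 0) + (2 : ℝ) • (0, 0, z) := by simp
    rw [h, map_add, map_smul] at f1
    simpa using f1
  · simpa using f2
end

section
/- (Coordinate invariance of Zermelo's expressions.) Let K̄ : ℝⁿ × ℝⁿ × ℝⁿ → ℝ be C¹ and let χ : ℝⁿ → ℝⁿ be C². Define K(x, y, z) := K̄(χ(x), Dχ(x)(y), Dχ(x)(z) + D²χ(x)(y, y)), where Dχ(x) is the Fréchet derivative of χ at x and D²χ(x) its second derivative regarded as a symmetric bilinear map ℝⁿ × ℝⁿ → ℝⁿ. Then for every (x, y, z), writing x̄ = χ(x), ȳ = Dχ(x)(y), z̄ = Dχ(x)(z) + D²χ(x)(y, y): D_yK(x, y, z)(y) + 2·D_zK(x, y, z)(z) = D_yK̄(x̄, ȳ, z̄)(ȳ) + 2·D_zK̄(x̄, ȳ, z̄)(z̄), and D_zK(x, y, z)(y) = D_zK̄(x̄, ȳ, z̄)(ȳ). Consequently Zermelo's conditions are independent of the choice of coordinates under second-order coordinate transformations. -/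
/-- **Coordinate invariance of Zermelo's expressions.**  If
`K(x, y, z) = K̄(χ(x), Dχ(x)(y), Dχ(x)(z) + D²χ(x)(y, y))` is the transform of `K̄` under a
second-order coordinate change induced by `χ`, then the two Zermelo expressions computed for
`K` at `(x, y, z)` agree with those computed for `K̄` at the transformed point. -/
theorem zermelo_expressions_coordinate_invariant
    (n : ℕ)
    (Kbar : EuclideanSpace ℝ (Fin n) × EuclideanSpace ℝ (Fin n) × EuclideanSpace ℝ (Fin n) → ℝ)
    (hKbar : ContDiff ℝ 1 Kbar)
    (χ : EuclideanSpace ℝ (Fin n) → EuclideanSpace ℝ (Fin n)) (hχ : ContDiff ℝ 2 χ)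
    (K : EuclideanSpace ℝ (Fin n) × EuclideanSpace ℝ (Fin n) × EuclideanSpace ℝ (Fin n) → ℝ)
    (hKdef : ∀ x y z : EuclideanSpace ℝ (Fin n),
      K (x, y, z) = Kbar (χ x, fderiv ℝ χ x y,
        fderiv ℝ χ x z + (fderiv ℝ (fun x' => fderiv ℝ χ x') x) y y))
    (x y z : EuclideanSpace ℝ (Fin n)) :
    (fderiv ℝ (fun y' => K (x, y', z)) y y + 2 * fderiv ℝ (fun z' => K (x, y, z')) z z
        = fderiv ℝ (fun y' => Kbar (χ x, y',
              fderiv ℝ χ x z + (fderiv ℝ (fun x' => fderiv ℝ χ x') x) y y))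
            (fderiv ℝ χ x y) (fderiv ℝ χ x y)
          + 2 * fderiv ℝ (fun z' => Kbar (χ x, fderiv ℝ χ x y, z'))
              (fderiv ℝ χ x z + (fderiv ℝ (fun x' => fderiv ℝ χ x') x) y y)
              (fderiv ℝ χ x z + (fderiv ℝ (fun x' => fderiv ℝ χ x') x) y y))
      ∧ (fderiv ℝ (fun z' => K (x, y, z')) z y
        = fderiv ℝ (fun z' => Kbar (χ x, fderiv ℝ χ x y, z'))
            (fderiv ℝ χ x z + (fderiv ℝ (fun x' => fderiv ℝ χ x') x) y y)
            (fderiv ℝ χ x y)) := by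
  simp only [hKdef]
  generalize fderiv ℝ (fun x' => fderiv ℝ χ x') x = B
  generalize fderiv ℝ χ x = A
  generalize χ x = p
  set w := A z + B y y with hw
  have hd : HasFDerivAt Kbar (fderiv ℝ Kbar (p, A y, w)) (p, A y, w) :=
    ((hKbar.differentiable (by norm_num)) _).hasFDerivAt
  generalize fderiv ℝ Kbar (p, A y, w) = L at hd
  have hB : HasFDerivAt (fun y' => A z + B y' y') ((B y).comp (.id ℝ _) + B.flip y) y := by
    have := (B.hasFDerivAt (x := y)).clm_apply (hasFDerivAt_id (𝕜 := ℝ) y)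
    exact this.const_add (A z)
  have hA : HasFDerivAt (fun z' => A z' + B y y) A z := A.hasFDerivAt.add_const _
  have h1 := HasFDerivAt.comp y (f := fun y' => (p, A y', A z + B y' y')) hd
    ((hasFDerivAt_const p y).prodMk (A.hasFDerivAt.prodMk hB))
  have h2 := HasFDerivAt.comp z (f := fun z' => (p, A y, A z' + B y y)) hd
    ((hasFDerivAt_const p z).prodMk ((hasFDerivAt_const (A y) z).prodMk hA))
  have h3 := HasFDerivAt.comp (A y) (f := fun y' => (p, y', w)) hd
    ((hasFDerivAt_const p (A y)).prodMk ((hasFDerivAt_id (A y)).prodMk (hasFDerivAt_const w (A y))))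
  have h4 := HasFDerivAt.comp w (f := fun z' => (p, A y, z')) hd
    ((hasFDerivAt_const p w).prodMk ((hasFDerivAt_const (A y) w).prodMk (hasFDerivAt_id w)))
  have e1 := h1.fderiv
  have e2 := h2.fderiv
  have e3 := h3.fderiv
  have e4 := h4.fderiv
  simp only [Function.comp_def] at e1 e2 e3 e4
  rw [e1, e2, e3, e4]
  constructor
  · simp only [ContinuousLinearMap.comp_apply, ContinuousLinearMap.prod_apply,
      add_apply, zero_apply,
      ContinuousLinearMap.flip_apply, ContinuousLinearMap.id_apply]
    rw [two_mul, two_mul, ← map_add L, ← map_add L, ← map_add L, ← map_add L]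
    congr 1
    simp only [Prod.mk_add_mk, hw, add_zero, zero_add]
    congr 2
    abel
  · simp
end
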